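/- There exists δ₀ ∈ (0,1) such that for every δ ∈ (0,δ₀) and every ε with 0 < ε < 1−δ there is a constant C = C(δ,ε) > 0, independent of N, M, L, with the following property: for all dyadic numbers N, M, L and every u ∈ 𝒮(ℝ×ℝ²) whose space-time Fourier transform ũ(τ,ξ,η) is supported in { (τ,ξ,η) : N/2 ≤ |(ξ,η)| ≤ 2N, M/2 ≤ |ξ+η| ≤ 2M, L/2 ≤ |τ − ξ³ − η³| ≤ 2L }, one has ‖u‖_{L^{4/(1+δ)}_{t,x,y}(ℝ×ℝ²)} ≤ C (NM)^{ε/4} L^{5(1−δ)/12 − ε/6} ‖u‖_{L²_{t,x,y}}. -/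

import Mathlib

/-!
The estimate interpolates between two bounds for `‖u‖_{L^p}`, `p = 4/(1+δ)`.

*The `L`-only bound.* For fixed `σ` the surface `τ = σ + ξ³ + η³` has a propagator decaying like
`|t|^{-2/3}`, uniformly in frequency truncations, because it is a product of two Airy integrals
(`airy_bound`, `dispersive`). A `TT*` argument (`time_tt`) that uses this decay for time
separations at least `s` and a Bessel inequality (`bessel`) for smaller ones gives a dual
Strichartz estimate (`free_strichartz`). Since `ũ` lives on the union of these surfaces over
`|σ| ≤ 2L`, Cauchy–Schwarz in the sheared variables (`cs_support`) costs a factor `L^{1/2}`.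
Testing against the phase of `u` on a superlevel set and optimizing in `s` yields the weak-type
bound `‖u‖_{L^{5,∞}} ≲ L^{1/2} ‖u‖_{L²}` (`weak_bound`). The exponent `p` lies strictly between `2`
and `5`, so with Chebyshev's inequality the layer-cake formula gives
`‖u‖_{L^p} ≲ L^{5(1-δ)/12} ‖u‖_{L²}` (`layer_bound`).

*The Bernstein bound.* The support of `ũ` has measure `O(NML)`, so
`‖u‖_{L^∞} ≲ (NML)^{1/2} ‖u‖_{L²}` (`sup_bound`), and hence
`‖u‖_{L^p} ≲ (NML)^{(1-δ)/4} ‖u‖_{L²}`.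

The geometric mean of the two bounds with weights `1 - θ` and `θ = ε/(1-δ)` (`interp_bound`) has
exactly the exponents of the theorem. Inversion and Plancherel for the Fourier transform `ftt`
are in `fourier_facts`.
-/

noncomputable section

open MeasureTheory
open scoped ENNReal

/-- Space-time Fourier transform `ũ(τ,ξ,η)` of a function `u(t,x,y)`. -/
def ftt (w : ℝ → ℝ → ℝ → ℂ) (τ ξ η : ℝ) : ℂ :=
  ∫ t : ℝ, ∫ x : ℝ, ∫ y : ℝ,
    Complex.exp (-Complex.I * ((t * τ + x * ξ + y * η : ℝ) : ℂ)) * w t x y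

/-- L^r norm over all of `ℝ × ℝ²`, for a real exponent `r`. -/
def lpnorm3 (r : ℝ) (w : ℝ → ℝ → ℝ → ℂ) : ℝ≥0∞ :=
  (∫⁻ v : ℝ × ℝ × ℝ, (‖w v.1 v.2.1 v.2.2‖₊ : ℝ≥0∞) ^ r) ^ (1 / r)

open scoped ComplexConjugate

/-! ### Oscillatory integrals with cubic phase -/

/-- The character `r ↦ e^{-ir}`, with the sign convention of `ftt`. -/
def chr (r : ℝ) : ℂ := Complex.exp (-Complex.I * (r : ℂ))

lemma chr_add (a b : ℝ) : chr (a + b) = chr a * chr b := by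
  unfold chr; rw [← Complex.exp_add]; push_cast; ring_nf

@[simp] lemma norm_chr (r : ℝ) : ‖chr r‖ = 1 := by
  unfold chr
  rw [show -Complex.I * (r : ℂ) = ((-r : ℝ) : ℂ) * Complex.I by push_cast; ring]
  exact Complex.norm_exp_ofReal_mul_I _

lemma conj_chr (r : ℝ) : (starRingEnd ℂ) (chr r) = chr (-r) := by
  unfold chr
  rw [← Complex.exp_conj]; simp

@[fun_prop] lemma continuous_chr : Continuous chr := by
  unfold chr; fun_prop

@[fun_prop] lemma measurable_chr : Measurable chr := continuous_chr.measurable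

lemma hasDerivAt_chr_comp {f : ℝ → ℝ} {f' x : ℝ} (h : HasDerivAt f f' x) :
    HasDerivAt (fun y => chr (f y)) (chr (f x) * (-Complex.I * (f' : ℂ))) x := by
  unfold chr
  exact ((h.ofReal_comp).const_mul (-Complex.I)).cexp

/-- First-derivative test for the cubic phase `xξ + tξ³` on `[a, b] ⊆ [0, ∞)`. Integrating
`1/φ'` against `(e^{-iφ})'` by parts works because `φ'` is monotone there, so that the total
variation of `1/φ'` is a difference of endpoint values. -/
lemma airy_first {x t a b ρ : ℝ} (ht : 0 < t) (ha : 0 ≤ a) (hab : a ≤ b) (hρ : 0 < ρ)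
    (h : (∀ ξ ∈ Set.Icc a b, ρ ≤ x + 3 * t * ξ ^ 2) ∨
      (∀ ξ ∈ Set.Icc a b, x + 3 * t * ξ ^ 2 ≤ -ρ)) :
    ‖∫ ξ in a..b, chr (x * ξ + t * ξ ^ 3)‖ ≤ 3 / ρ := by
  set d : ℝ → ℝ := fun ξ => x + 3 * t * ξ ^ 2 with hd
  have hne : ∀ ξ ∈ Set.Icc a b, d ξ ≠ 0 := by
    intro ξ hξ
    rcases h with h | h
    · have := h ξ hξ; simp only [hd]; linarith
    · have := h ξ hξ; simp only [hd]; linarith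
  have hinv : ∀ ξ ∈ Set.Icc a b, |(d ξ)⁻¹| ≤ ρ⁻¹ := by
    intro ξ hξ
    rw [abs_inv]
    apply inv_anti₀ hρ
    rcases h with h | h
    · exact (h ξ hξ).trans (le_abs_self _)
    · have := h ξ hξ
      exact (by simp only [hd]; linarith : ρ ≤ -d ξ).trans (neg_le_abs _)
  have hdd : ∀ ξ, HasDerivAt d (6 * t * ξ) ξ := by
    intro ξ
    have := ((hasDerivAt_pow 2 ξ).const_mul (3 * t)).const_add x
    refine this.congr_deriv ?_
    norm_num; ring
  have hph : ∀ ξ, HasDerivAt (fun ξ => x * ξ + t * ξ ^ 3) (d ξ) ξ := by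
    intro ξ
    have := ((hasDerivAt_id ξ).const_mul x).add ((hasDerivAt_pow 3 ξ).const_mul t)
    refine this.congr_deriv ?_
    simp only [hd]; norm_num; ring
  have hI : Set.uIcc a b = Set.Icc a b := Set.uIcc_of_le hab
  have hdc : Continuous d := by simp only [hd]; fun_prop
  have hΨ : ∀ ξ ∈ Set.uIcc a b, HasDerivAt
      (fun ξ => Complex.I * (((d ξ)⁻¹ : ℝ) : ℂ) * chr (x * ξ + t * ξ ^ 3))
      (chr (x * ξ + t * ξ ^ 3) + Complex.I * ((-(6 * t * ξ) / d ξ ^ 2 : ℝ) : ℂ)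
        * chr (x * ξ + t * ξ ^ 3)) ξ := by
    intro ξ hξ
    rw [hI] at hξ
    have h1 := (((hdd ξ).inv (hne ξ hξ)).ofReal_comp.const_mul Complex.I).mul
      (hasDerivAt_chr_comp (hph ξ))
    refine h1.congr_deriv ?_
    have : (d ξ : ℂ) ≠ 0 := by exact_mod_cast hne ξ hξ
    have hdi : ((d⁻¹ ξ : ℝ) : ℂ) * (d ξ : ℂ) = 1 := by
      simp only [Pi.inv_apply, Complex.ofReal_inv]
      exact inv_mul_cancel₀ this
    linear_combination (chr (x * ξ + t * ξ ^ 3)) * hdi -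
      ((d⁻¹ ξ : ℝ) : ℂ) * (d ξ : ℂ) * chr (x * ξ + t * ξ ^ 3) * Complex.I_sq
  have hc1 : ContinuousOn (fun ξ => -(6 * t * ξ) / d ξ ^ 2) (Set.Icc a b) := by
    apply ContinuousOn.div (by fun_prop) (by fun_prop)
    intro ξ hξ
    exact pow_ne_zero _ (hne ξ hξ)
  have hi1 : IntervalIntegrable (fun ξ => chr (x * ξ + t * ξ ^ 3)) volume a b :=
    (by fun_prop : Continuous fun ξ => chr (x * ξ + t * ξ ^ 3)).intervalIntegrable _ _
  have hi2 : IntervalIntegrable (fun ξ => Complex.I * ((-(6 * t * ξ) / d ξ ^ 2 : ℝ) : ℂ)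
        * chr (x * ξ + t * ξ ^ 3)) volume a b := by
    apply ContinuousOn.intervalIntegrable
    rw [hI]
    exact ((continuousOn_const).mul (Complex.continuous_ofReal.comp_continuousOn hc1)).mul
      (by fun_prop)
  have hftc := intervalIntegral.integral_eq_sub_of_hasDerivAt hΨ (hi1.add hi2)
  rw [intervalIntegral.integral_add hi1 hi2] at hftc
  have hb2 : ‖∫ ξ in a..b, Complex.I * ((-(6 * t * ξ) / d ξ ^ 2 : ℝ) : ℂ)
        * chr (x * ξ + t * ξ ^ 3)‖ ≤ (d a)⁻¹ - (d b)⁻¹ := by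
    calc _ ≤ ∫ ξ in a..b, -(-(6 * t * ξ) / d ξ ^ 2) := by
          apply intervalIntegral.norm_integral_le_of_norm_le hab
          · filter_upwards with ξ hξ
            have h0 : 0 ≤ ξ := ha.trans hξ.1.le
            rw [norm_mul, norm_mul, norm_chr, Complex.norm_I, Complex.norm_real, one_mul, mul_one,
              Real.norm_eq_abs, abs_of_nonpos]
            apply div_nonpos_of_nonpos_of_nonneg _ (sq_nonneg _)
            have : 0 ≤ 6 * t * ξ := by positivity
            linarith
          · apply ContinuousOn.intervalIntegrable
            rw [hI]; exact hc1.neg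
      _ = (d a)⁻¹ - (d b)⁻¹ := by
          rw [intervalIntegral.integral_neg,
            intervalIntegral.integral_eq_sub_of_hasDerivAt (f := fun ξ => (d ξ)⁻¹)]
          · ring
          · intro ξ hξ; rw [hI] at hξ; exact (hdd ξ).inv (hne ξ hξ)
          · apply ContinuousOn.intervalIntegrable
            rw [hI]; exact hc1
  have hA := hinv a ⟨le_rfl, hab⟩
  have hB := hinv b ⟨hab, le_rfl⟩
  have key : ‖∫ ξ in a..b, chr (x * ξ + t * ξ ^ 3)‖ ≤
      |(d b)⁻¹| + |(d a)⁻¹| + ((d a)⁻¹ - (d b)⁻¹) := by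
    rw [eq_sub_of_add_eq hftc]
    refine (norm_sub_le _ _).trans (add_le_add ((norm_sub_le _ _).trans ?_) hb2)
    simp [-Complex.ofReal_inv]
  refine key.trans ?_
  have e3 : 3 / ρ = 3 * ρ⁻¹ := by ring
  rw [e3]
  -- the two inverses have the same sign
  rcases h with h | h
  · have p1 : 0 ≤ (d b)⁻¹ := inv_nonneg.2 (hρ.le.trans (h b ⟨hab, le_rfl⟩))
    have := le_abs_self (d a)⁻¹
    linarith
  · have p1 : (d a)⁻¹ ≤ 0 := inv_nonpos.2 (by have := h a ⟨le_rfl, hab⟩; simp only [hd]; linarith)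
    have := neg_le_abs (d b)⁻¹
    linarith

/-- Van der Corput's bound on the half-line: with `ρ = t^{1/3}`, the set of `ξ ∈ [0, A]` where
`|x + 3tξ²| < ρ` is an interval of length at most `1/ρ`, and `airy_first` handles each of the two
remaining intervals. The bound is uniform in `x` and in the truncation `A`. -/
lemma airy_half {x t A : ℝ} (ht : 0 < t) (hA : 0 ≤ A) :
    ‖∫ ξ in (0:ℝ)..A, chr (x * ξ + t * ξ ^ 3)‖ ≤ 7 * t ^ (-(1:ℝ)/3) := by
  set ρ : ℝ := t ^ ((1:ℝ)/3) with hρd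
  have hρ : 0 < ρ := Real.rpow_pos_of_pos ht _
  have hρ3 : ρ ^ 3 = t := by
    rw [hρd, ← Real.rpow_natCast, ← Real.rpow_mul ht.le]; norm_num
  have hρi : t ^ (-(1:ℝ)/3) = ρ⁻¹ := by
    rw [hρd, ← Real.rpow_neg ht.le]; norm_num
  set p : ℝ := min (Real.sqrt ((ρ - x) / (3 * t))) A with hp
  set m : ℝ := min (Real.sqrt ((-ρ - x) / (3 * t))) A with hm
  have hm0 : 0 ≤ m := le_min (Real.sqrt_nonneg _) hA
  have hmp : m ≤ p := by
    apply min_le_min_right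
    apply Real.sqrt_le_sqrt
    gcongr; linarith
  have hpA : p ≤ A := min_le_right _ _
  have hi : ∀ a b, IntervalIntegrable (fun ξ => chr (x * ξ + t * ξ ^ 3)) volume a b := fun a b =>
    (by fun_prop : Continuous fun ξ => chr (x * ξ + t * ξ ^ 3)).intervalIntegrable _ _
  have h1 : ‖∫ ξ in (0:ℝ)..m, chr (x * ξ + t * ξ ^ 3)‖ ≤ 3 / ρ := by
    rcases hm0.eq_or_lt with h0 | h0
    · rw [← h0]; simp; positivity
    apply airy_first ht le_rfl hm0 hρ
    right
    intro ξ hξ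
    have hs : ξ ≤ Real.sqrt ((-ρ - x) / (3 * t)) := hξ.2.trans (min_le_left _ _)
    have hpos : 0 < Real.sqrt ((-ρ - x) / (3 * t)) := h0.trans_le (min_le_left _ _)
    have h2 : ξ ^ 2 ≤ (-ρ - x) / (3 * t) := by
      rw [← Real.sq_sqrt (Real.sqrt_pos.1 hpos).le]
      exact pow_le_pow_left₀ hξ.1 hs 2
    rw [le_div_iff₀ (by positivity)] at h2
    linarith
  have h3 : ‖∫ ξ in p..A, chr (x * ξ + t * ξ ^ 3)‖ ≤ 3 / ρ := by
    rcases hpA.eq_or_lt with h0 | h0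
    · rw [h0]; simp; positivity
    apply airy_first ht (hm0.trans hmp) hpA hρ
    left
    intro ξ hξ
    have hpe : p = Real.sqrt ((ρ - x) / (3 * t)) := by
      rcases min_choice (Real.sqrt ((ρ - x) / (3 * t))) A with h | h
      · exact h
      · rw [hp] at h0; linarith
    have h2 : (ρ - x) / (3 * t) ≤ ξ ^ 2 := by
      apply Real.sqrt_le_iff.1 _ |>.2
      rw [← hpe]; exact hξ.1
    rw [div_le_iff₀ (by positivity)] at h2
    linarith
  have h2 : ‖∫ ξ in m..p, chr (x * ξ + t * ξ ^ 3)‖ ≤ 1 / ρ := by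
    have hle : ‖∫ ξ in m..p, chr (x * ξ + t * ξ ^ 3)‖ ≤ 1 * |p - m| :=
      intervalIntegral.norm_integral_le_of_norm_le_const (by simp)
    rw [one_mul, abs_of_nonneg (by linarith)] at hle
    refine hle.trans ?_
    have hd1 : p - m ≤ Real.sqrt ((ρ - x) / (3 * t)) - Real.sqrt ((-ρ - x) / (3 * t)) := by
      have hss : Real.sqrt ((-ρ - x) / (3 * t)) ≤ Real.sqrt ((ρ - x) / (3 * t)) := by
        apply Real.sqrt_le_sqrt
        gcongr; linarith
      rw [hp, hm]
      rcases le_total (Real.sqrt ((ρ - x) / (3 * t))) A with h | h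
      · rw [min_eq_left h, min_eq_left (hss.trans h)]
      · rw [min_eq_right h]
        rcases le_total (Real.sqrt ((-ρ - x) / (3 * t))) A with h' | h'
        · rw [min_eq_left h']; linarith
        · rw [min_eq_right h']; linarith
    refine hd1.trans ?_
    have e : (ρ - x) / (3 * t) = (-ρ - x) / (3 * t) + 2 / 3 * (1 / ρ) ^ 2 := by
      rw [← hρ3]; field_simp; ring
    rw [sub_le_iff_le_add, e, Real.sqrt_le_iff]
    refine ⟨by positivity, ?_⟩
    have hb : (-ρ - x) / (3 * t) ≤ Real.sqrt ((-ρ - x) / (3 * t)) ^ 2 := by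
      rcases le_total 0 ((-ρ - x) / (3 * t)) with h | h
      · rw [Real.sq_sqrt h]
      · exact h.trans (sq_nonneg _)
    have hc : 0 ≤ 1 / ρ * Real.sqrt ((-ρ - x) / (3 * t)) := by positivity
    nlinarith [sq_nonneg (1 / ρ)]
  rw [← intervalIntegral.integral_add_adjacent_intervals (hi 0 m) (hi m A),
    ← intervalIntegral.integral_add_adjacent_intervals (hi m p) (hi p A), hρi]
  have := norm_add₃_le (a := ∫ ξ in (0:ℝ)..m, chr (x * ξ + t * ξ ^ 3))
    (b := ∫ ξ in m..p, chr (x * ξ + t * ξ ^ 3)) (c := ∫ ξ in p..A, chr (x * ξ + t * ξ ^ 3))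
  rw [← add_assoc]
  refine this.trans ?_
  have e : 7 * ρ⁻¹ = 3 / ρ + 1 / ρ + 3 / ρ := by field_simp; norm_num
  rw [e]; gcongr

lemma norm_airy_neg (x t a b : ℝ) :
    ‖∫ ξ in a..b, chr (-x * ξ + -t * ξ ^ 3)‖ = ‖∫ ξ in a..b, chr (x * ξ + t * ξ ^ 3)‖ := by
  rw [← Complex.norm_conj (∫ ξ in a..b, chr (x * ξ + t * ξ ^ 3))]
  congr 1
  rw [← intervalIntegral.intervalIntegral_conj]
  congr 1; ext ξ
  rw [conj_chr]; congr 1; ring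

/-- Airy bound `O(|t|^{-1/3})`, uniform in the position `x` and in the frequency truncation `A`. -/
lemma airy_bound {x t A : ℝ} (ht : t ≠ 0) (hA : 0 ≤ A) :
    ‖∫ ξ in (-A)..A, chr (x * ξ + t * ξ ^ 3)‖ ≤ 14 * |t| ^ (-(1:ℝ)/3) := by
  have pos : ∀ x t : ℝ, 0 < t →
      ‖∫ ξ in (-A)..A, chr (x * ξ + t * ξ ^ 3)‖ ≤ 14 * |t| ^ (-(1:ℝ)/3) := by
    intro x t ht
    have hi : ∀ a b, IntervalIntegrable (fun ξ => chr (x * ξ + t * ξ ^ 3)) volume a b := fun a b =>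
      (by fun_prop : Continuous fun ξ => chr (x * ξ + t * ξ ^ 3)).intervalIntegrable _ _
    rw [← intervalIntegral.integral_add_adjacent_intervals (hi (-A) 0) (hi 0 A)]
    have h1 : ‖∫ ξ in (-A)..0, chr (x * ξ + t * ξ ^ 3)‖
        = ‖∫ ξ in (0:ℝ)..A, chr (x * ξ + t * ξ ^ 3)‖ := by
      rw [← norm_airy_neg x t 0 A]
      have := intervalIntegral.integral_comp_neg (a := 0) (b := A)
        (fun ξ => chr (x * ξ + t * ξ ^ 3))
      rw [neg_zero] at this
      rw [← this]
      congr 2; ext ξ; congr 1; ring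
    have := airy_half (x := x) ht hA
    rw [abs_of_pos ht]
    refine (norm_add_le _ _).trans ?_
    rw [h1]; linarith
  rcases lt_or_gt_of_ne ht with h | h
  · rw [← norm_airy_neg, ← abs_neg]
    exact pos (-x) (-t) (by linarith)
  · exact pos x t h

/-! ### The `TT*` argument -/

/-- The `L²(ν)` pairing of two superpositions is the double integral of the pairings. -/
lemma integral_mul_conj_eq {X Ξ : Type*} [MeasurableSpace X] [MeasurableSpace Ξ]
    (μ : Measure X) (ν : Measure Ξ) [IsFiniteMeasure μ] [IsFiniteMeasure ν]
    {H H' : X → Ξ → ℂ} (hH : Measurable (Function.uncurry H))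
    (hH' : Measurable (Function.uncurry H')) {K K' : ℝ}
    (hK : ∀ x ξ, ‖H x ξ‖ ≤ K) (hK' : ∀ x ξ, ‖H' x ξ‖ ≤ K') :
    ∫ ξ, (∫ x, H x ξ ∂μ) * conj (∫ x, H' x ξ ∂μ) ∂ν =
      ∫ p : X × X, (∫ ξ, H p.1 ξ * conj (H' p.2 ξ) ∂ν) ∂(μ.prod μ) := by
  rw [integral_integral_swap]
  · congr 1; ext ξ
    rw [← integral_conj, ← integral_prod_mul]
  · refine Integrable.of_bound (C := K * K') ?_ ?_
    · apply Measurable.aestronglyMeasurable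
      have h1 : Measurable fun q : (X × X) × Ξ => H q.1.1 q.2 :=
        hH.comp (by fun_prop : Measurable fun q : (X × X) × Ξ => (q.1.1, q.2))
      have h2 : Measurable fun q : (X × X) × Ξ => H' q.1.2 q.2 :=
        hH'.comp (by fun_prop : Measurable fun q : (X × X) × Ξ => (q.1.2, q.2))
      exact h1.mul (Complex.continuous_conj.measurable.comp h2)
    · filter_upwards with q
      simp only [Function.uncurry, norm_mul, RCLike.norm_conj]
      exact mul_le_mul (hK _ _) (hK' _ _) (norm_nonneg _) ((norm_nonneg _).trans (hK q.1.1 q.2))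

lemma ofReal_integral_norm_sq {Ξ : Type*} [MeasurableSpace Ξ] (ν : Measure Ξ) (F : Ξ → ℂ) :
    ((∫ ξ, ‖F ξ‖ ^ 2 ∂ν : ℝ) : ℂ) = ∫ ξ, F ξ * conj (F ξ) ∂ν := by
  rw [← integral_complex_ofReal]
  congr 1; ext ξ
  rw [Complex.mul_conj, Complex.normSq_eq_norm_sq]

lemma measurable_integral_left {X Ξ : Type*} [MeasurableSpace X] [MeasurableSpace Ξ]
    (μ : Measure X) [SFinite μ] {H : X → Ξ → ℂ} (hH : Measurable (Function.uncurry H)) :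
    Measurable fun ξ => ∫ x, H x ξ ∂μ := by
  have : StronglyMeasurable (Function.uncurry fun ξ x => H x ξ) :=
    (hH.comp measurable_swap).stronglyMeasurable
  exact (this.integral_prod_right).measurable

lemma norm_integral_le_mul_real {X : Type*} [MeasurableSpace X] (μ : Measure X)
    [IsFiniteMeasure μ] {f : X → ℂ} {K : ℝ} (hK : ∀ x, ‖f x‖ ≤ K) :
    ‖∫ x, f x ∂μ‖ ≤ K * μ.real Set.univ :=
  norm_integral_le_of_norm_le_const (Filter.Eventually.of_forall hK)

/-- Abstract `TT*` estimate in time. Pairs of times with `|t - t'| < s` are controlled by the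
fixed-time bound `hB`, the others by the dispersive decay `hQ`. The splitting parameter `s` is
left free and is optimized in `weak_bound`. -/
lemma time_tt {Ξ : Type*} [MeasurableSpace Ξ] (μ : Measure ℝ) [IsFiniteMeasure μ]
    (hμ : μ ≤ volume) (ν : Measure Ξ) [IsFiniteMeasure ν] {H : ℝ → Ξ → ℂ}
    (hH : Measurable (Function.uncurry H)) {K : ℝ} (hK : ∀ t ξ, ‖H t ξ‖ ≤ K)
    {m : ℝ → ℝ} (hm : Measurable m) (hm0 : ∀ t, 0 ≤ m t) {K' : ℝ} (hmK : ∀ t, m t ≤ K')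
    {C₁ C₂ s : ℝ} (hC₁ : 0 ≤ C₁) (hC₂ : 0 ≤ C₂) (hs : 0 < s)
    (hB : ∀ t, ∫ ξ, ‖H t ξ‖ ^ 2 ∂ν ≤ C₁ * m t)
    (hQ : ∀ t t', t ≠ t' → ‖∫ ξ, H t ξ * conj (H t' ξ) ∂ν‖ ≤
      C₂ * |t - t'| ^ (-(2:ℝ)/3) * (m t * m t')) :
    ∫ ξ, ‖∫ t, H t ξ ∂μ‖ ^ 2 ∂ν ≤
      2 * C₁ * s * (∫ t, m t ∂μ) + C₂ * s ^ (-(2:ℝ)/3) * (∫ t, m t ∂μ) ^ 2 := by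
  have hmi : Integrable m μ := Integrable.of_bound (C := K') hm.aestronglyMeasurable
    (by filter_upwards with t; rw [Real.norm_of_nonneg (hm0 t)]; exact hmK t)
  have hsq : ∀ t, Integrable (fun ξ => ‖H t ξ‖ ^ 2) ν := by
    intro t
    have h1 : Measurable (H t) := hH.comp measurable_prodMk_left
    refine Integrable.of_bound (C := K ^ 2) (h1.norm.pow_const 2).aestronglyMeasurable ?_
    filter_upwards with ξ
    rw [Real.norm_of_nonneg (by positivity)]
    exact pow_le_pow_left₀ (norm_nonneg _) (hK t ξ) 2
  set S : Set (ℝ × ℝ) := {p | |p.1 - p.2| < s} with hS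
  have hSm : MeasurableSet S := measurableSet_lt (by fun_prop) measurable_const
  have hpt : ∀ p : ℝ × ℝ, ‖∫ ξ, H p.1 ξ * conj (H p.2 ξ) ∂ν‖ ≤
      S.indicator (fun p => C₁ / 2 * m p.1) p + S.indicator (fun p => C₁ / 2 * m p.2) p +
      C₂ * s ^ (-(2:ℝ)/3) * (m p.1 * m p.2) := by
    rintro ⟨t, t'⟩
    by_cases hp : (t, t') ∈ S
    · rw [Set.indicator_of_mem hp, Set.indicator_of_mem hp]
      have h0 : 0 ≤ C₂ * s ^ (-(2:ℝ)/3) * (m t * m t') := by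
        have := hm0 t; have := hm0 t'; positivity
      have h1 : ‖∫ ξ, H t ξ * conj (H t' ξ) ∂ν‖ ≤
          ∫ ξ, (‖H t ξ‖ ^ 2 / 2 + ‖H t' ξ‖ ^ 2 / 2) ∂ν := by
        apply norm_integral_le_of_norm_le (((hsq t).div_const 2).add ((hsq t').div_const 2))
        filter_upwards with ξ
        rw [norm_mul, RCLike.norm_conj]
        simp only [Pi.add_apply]
        nlinarith [sq_nonneg (‖H t ξ‖ - ‖H t' ξ‖)]
      rw [integral_add ((hsq t).div_const 2) ((hsq t').div_const 2), integral_div,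
        integral_div] at h1
      have := hB t; have := hB t'
      simp only
      linarith
    · rw [Set.indicator_of_notMem hp, Set.indicator_of_notMem hp, zero_add, zero_add]
      simp only [hS, Set.mem_ofPred_eq, not_lt] at hp
      have hne : t ≠ t' := by
        rintro rfl; simp at hp; linarith
      refine (hQ t t' hne).trans ?_
      have := hm0 t; have := hm0 t'
      gcongr ?_ * ?_ * ?_
      exact Real.rpow_le_rpow_of_nonpos hs hp (by norm_num)
  have hi1 : Integrable (S.indicator (fun p : ℝ × ℝ => C₁ / 2 * m p.1)) (μ.prod μ) :=
    ((hmi.comp_fst μ).const_mul _).indicator hSm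
  have hi2 : Integrable (S.indicator (fun p : ℝ × ℝ => C₁ / 2 * m p.2)) (μ.prod μ) :=
    ((hmi.comp_snd μ).const_mul _).indicator hSm
  have hi3 : Integrable (fun p : ℝ × ℝ => C₂ * s ^ (-(2:ℝ)/3) * (m p.1 * m p.2)) (μ.prod μ) :=
    (hmi.mul_prod hmi).const_mul _
  have hball : ∀ t, μ.real {t' | |t - t'| < s} ≤ 2 * s := by
    intro t
    have : {t' | |t - t'| < s} = Metric.ball t s := by
      ext t'; simp [Real.dist_eq, abs_sub_comm]
    rw [this, Measure.real]
    apply ENNReal.toReal_le_of_le_ofReal (by positivity)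
    refine (hμ _).trans ?_
    rw [Real.volume_ball]
  have hind : ∀ (c t : ℝ), ∫ t', {t' | |t - t'| < s}.indicator (fun _ => c) t' ∂μ =
      μ.real {t' | |t - t'| < s} * c := by
    intro c t
    rw [integral_indicator (measurableSet_lt (by fun_prop) measurable_const)]
    simp
  have hbd : ∀ t, μ.real {t' | |t - t'| < s} * (C₁ / 2 * m t) ≤ C₁ * s * m t := by
    intro t
    calc _ ≤ 2 * s * (C₁ / 2 * m t) := by
          have := hm0 t
          gcongr; exact hball t
      _ = _ := by ring
  have hI1 : ∫ p, S.indicator (fun p : ℝ × ℝ => C₁ / 2 * m p.1) p ∂(μ.prod μ) ≤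
      C₁ * s * ∫ t, m t ∂μ := by
    rw [integral_prod _ hi1, ← integral_const_mul]
    apply integral_mono hi1.integral_prod_left (hmi.const_mul _)
    intro t
    refine le_trans (le_of_eq ?_) (hbd t)
    rw [← hind (C₁ / 2 * m t) t]
    rfl
  have hI2 : ∫ p, S.indicator (fun p : ℝ × ℝ => C₁ / 2 * m p.2) p ∂(μ.prod μ) ≤
      C₁ * s * ∫ t, m t ∂μ := by
    rw [integral_prod_symm _ hi2, ← integral_const_mul]
    apply integral_mono hi2.integral_prod_right (hmi.const_mul _)
    intro t
    refine le_trans (le_of_eq ?_) (hbd t)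
    rw [← hind (C₁ / 2 * m t) t]
    refine integral_congr_ae (Filter.Eventually.of_forall fun t' => ?_)
    simp only [Set.indicator, hS, Set.mem_ofPred_eq, abs_sub_comm]
  have hI3 : ∫ p : ℝ × ℝ, C₂ * s ^ (-(2:ℝ)/3) * (m p.1 * m p.2) ∂(μ.prod μ) =
      C₂ * s ^ (-(2:ℝ)/3) * (∫ t, m t ∂μ) ^ 2 := by
    rw [integral_const_mul, integral_prod_mul, sq]
  have e1 : (∫ ξ, ‖∫ t, H t ξ ∂μ‖ ^ 2 ∂ν) =
      ‖∫ p : ℝ × ℝ, (∫ ξ, H p.1 ξ * conj (H p.2 ξ) ∂ν) ∂(μ.prod μ)‖ := by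
    rw [← integral_mul_conj_eq μ ν hH hH hK hK, ← ofReal_integral_norm_sq, Complex.norm_real,
      Real.norm_of_nonneg]
    exact integral_nonneg fun _ => by positivity
  rw [e1]
  refine (norm_integral_le_of_norm_le ((hi1.add hi2).add hi3)
    (Filter.Eventually.of_forall hpt)).trans ?_
  have e2 := integral_add (hi1.add hi2) hi3
  have e3 := integral_add hi1 hi2
  simp only [Pi.add_apply] at e2 e3 ⊢
  rw [e2, e3, hI3]
  linarith

/-! ### Dual Strichartz estimate on a single surface -/

/-- Lebesgue measure on the frequency square `(-A, A]²`. -/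
def boxMeasure (A : ℝ) : Measure (ℝ × ℝ) :=
  (volume.restrict (Set.Ioc (-A) A)).prod (volume.restrict (Set.Ioc (-A) A))

instance (A : ℝ) : IsFiniteMeasure (boxMeasure A) := by
  unfold boxMeasure; infer_instance

/-- The least factor making a centred Gaussian density of variance `A²` at least `1` on `[-A, A]`. -/
def gaussConst (A : ℝ) : ℝ := Real.sqrt (2 * Real.pi * A ^ 2) * Real.exp (1 / 2)

/-- A multiple of the Gaussian measure of variance `A²` that dominates Lebesgue measure on
`(-A, A]` and whose Fourier transform is an explicit integrable Gaussian. -/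
def gaussDom (A : ℝ) : Measure ℝ :=
  ENNReal.ofReal (gaussConst A) • ProbabilityTheory.gaussianReal 0 (Real.toNNReal (A ^ 2))

instance (A : ℝ) : IsFiniteMeasure (gaussDom A) := by
  unfold gaussDom; exact Measure.smul_finite _ ENNReal.ofReal_ne_top

lemma restrict_le_gaussDom {A : ℝ} (hA : 0 < A) :
    volume.restrict (Set.Ioc (-A) A) ≤ gaussDom A := by
  have hv : (Real.toNNReal (A ^ 2)) ≠ 0 := by
    simp [hA.ne']
  rw [gaussDom, ProbabilityTheory.gaussianReal_of_var_ne_zero _ hv,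
    ← withDensity_smul _ (ProbabilityTheory.measurable_gaussianPDF _ _)]
  refine Measure.le_iff.2 fun s hs => ?_
  rw [withDensity_apply _ hs, Measure.restrict_apply hs, ← setLIntegral_one]
  calc ∫⁻ _ in s ∩ Set.Ioc (-A) A, (1 : ℝ≥0∞) ≤ ∫⁻ ξ in s ∩ Set.Ioc (-A) A,
        (ENNReal.ofReal (gaussConst A) • ProbabilityTheory.gaussianPDF 0 (Real.toNNReal (A ^ 2))) ξ := by
        apply setLIntegral_mono' (hs.inter measurableSet_Ioc)
        intro ξ hξ
        have hc : 0 ≤ gaussConst A := by unfold gaussConst; positivity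
        simp only [Pi.smul_apply, smul_eq_mul, ProbabilityTheory.gaussianPDF]
        rw [← ENNReal.ofReal_mul hc, ENNReal.one_le_ofReal, gaussConst,
          ProbabilityTheory.gaussianPDFReal]
        have h2 : ξ ^ 2 ≤ A ^ 2 := by
          rw [sq_le_sq, abs_of_pos hA, abs_le]; exact ⟨hξ.2.1.le, hξ.2.2⟩
        simp only [Real.coe_toNNReal _ (sq_nonneg A), sub_zero]
        have h3 : Real.sqrt (2 * Real.pi * A ^ 2) ≠ 0 := by positivity
        calc (1:ℝ) ≤ Real.exp (1 / 2 + -ξ ^ 2 / (2 * A ^ 2)) := by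
              apply Real.one_le_exp
              have : ξ ^ 2 / (2 * A ^ 2) ≤ 1 / 2 := by
                rw [div_le_iff₀ (by positivity)]; linarith
              rw [neg_div]; linarith
          _ = _ := by rw [Real.exp_add]; field_simp
    _ ≤ _ := lintegral_mono_set Set.inter_subset_left

lemma integral_chr_gaussDom (A a : ℝ) :
    ∫ ξ, chr (a * ξ) ∂(gaussDom A) =
      ((gaussConst A * Real.exp (-(A ^ 2 / 2) * a ^ 2) : ℝ) : ℂ) := by
  have hc : 0 ≤ gaussConst A := by unfold gaussConst; positivity
  rw [gaussDom, integral_smul_measure, ENNReal.toReal_ofReal hc]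
  have h := ProbabilityTheory.charFun_gaussianReal (μ := 0) (v := (Real.toNNReal (A ^ 2))) (-a)
  rw [charFun_apply_real] at h
  have e : ∀ ξ : ℝ, chr (a * ξ) = Complex.exp (((-a : ℝ) : ℂ) * ξ * Complex.I) := by
    intro ξ; unfold chr; congr 1; push_cast; ring
  simp_rw [e]
  rw [h]
  rw [Complex.real_smul, Complex.ofReal_mul, Complex.ofReal_exp]
  congr 2
  simp only [Real.coe_toNNReal _ (sq_nonneg A)]
  push_cast
  ring

lemma boxMeasure_le {A : ℝ} (hA : 0 < A) :
    boxMeasure A ≤ (gaussDom A).prod (gaussDom A) := by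
  refine Measure.le_iff.2 fun s hs => ?_
  rw [boxMeasure, Measure.prod_apply hs, Measure.prod_apply hs]
  exact lintegral_mono' (restrict_le_gaussDom hA) fun x => restrict_le_gaussDom hA _

/-- A Bessel inequality: the Fourier transform of a function bounded by `1` has `L²` norm squared
over the square at most a constant, independent of `A`, times its `L¹` norm. The square is
dominated by a product of Gaussians, and the kernel that results from expanding the square
has an integral that does not depend on `A`. -/
lemma bessel {A : ℝ} (hA : 0 < A) (μ : Measure (ℝ × ℝ)) [IsFiniteMeasure μ] (hμ : μ ≤ volume)
    {f : ℝ × ℝ → ℂ} (hf : Measurable f) (hf1 : ∀ x, ‖f x‖ ≤ 1) :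
    ∫ ξ, ‖∫ x, f x * chr (x.1 * ξ.1 + x.2 * ξ.2) ∂μ‖ ^ 2 ∂(boxMeasure A) ≤
      4 * Real.pi ^ 2 * Real.exp 1 * ∫ x, ‖f x‖ ∂μ := by
  set γ := (gaussDom A).prod (gaussDom A) with hγ
  set H : ℝ × ℝ → ℝ × ℝ → ℂ := fun x ξ => f x * chr (x.1 * ξ.1 + x.2 * ξ.2) with hH
  have hHm : Measurable (Function.uncurry H) := by
    simp only [hH, Function.uncurry_def]
    fun_prop
  have hH1 : ∀ x ξ, ‖H x ξ‖ ≤ 1 := by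
    intro x ξ; simp only [hH, norm_mul, norm_chr, mul_one]; exact hf1 x
  have hGm : Measurable fun ξ => ∫ x, H x ξ ∂μ := measurable_integral_left μ hHm
  have hGi : Integrable (fun ξ => ‖∫ x, H x ξ ∂μ‖ ^ 2) γ := by
    refine Integrable.of_bound (C := (1 * μ.real Set.univ) ^ 2)
      (hGm.norm.pow_const 2).aestronglyMeasurable ?_
    filter_upwards with ξ
    rw [Real.norm_of_nonneg (by positivity)]
    exact pow_le_pow_left₀ (norm_nonneg _) (norm_integral_le_mul_real μ fun x => hH1 x ξ) 2
  have step1 : ∫ ξ, ‖∫ x, H x ξ ∂μ‖ ^ 2 ∂(boxMeasure A) ≤ ∫ ξ, ‖∫ x, H x ξ ∂μ‖ ^ 2 ∂γ :=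
    integral_mono_measure (boxMeasure_le hA) (Filter.Eventually.of_forall fun _ => by positivity)
      hGi
  refine step1.trans ?_
  set k : ℝ → ℝ := fun a => gaussConst A * Real.exp (-(A ^ 2 / 2) * a ^ 2) with hk
  have hc : 0 ≤ gaussConst A := by unfold gaussConst; positivity
  have hk0 : ∀ a, 0 ≤ k a := fun a => by simp only [hk]; positivity
  have hkc : Continuous k := by simp only [hk]; fun_prop
  have hki : Integrable k := (integrable_exp_neg_mul_sq (by positivity)).const_mul _
  have hkI : ∫ a, k a = 2 * Real.pi * Real.exp (1 / 2) := by
    simp only [hk]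
    rw [integral_const_mul, integral_gaussian, gaussConst, mul_right_comm,
      ← Real.sqrt_mul (by positivity)]
    have : 2 * Real.pi * A ^ 2 * (Real.pi / (A ^ 2 / 2)) = (2 * Real.pi) ^ 2 := by
      field_simp
    rw [this, Real.sqrt_sq (by positivity)]
  have hin : ∀ p : (ℝ × ℝ) × (ℝ × ℝ), ∫ ξ, H p.1 ξ * conj (H p.2 ξ) ∂γ =
      f p.1 * conj (f p.2) * ((k (p.1.1 - p.2.1) * k (p.1.2 - p.2.2) : ℝ) : ℂ) := by
    intro p
    simp only [hk]
    rw [Complex.ofReal_mul, ← integral_chr_gaussDom, ← integral_chr_gaussDom, hγ,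
      ← integral_prod_mul, ← integral_const_mul]
    congr 1; ext ξ
    simp only [hH, map_mul, conj_chr]
    have e : chr ((p.1.1 - p.2.1) * ξ.1) * chr ((p.1.2 - p.2.2) * ξ.2) =
        chr (p.1.1 * ξ.1 + p.1.2 * ξ.2) * chr (-(p.2.1 * ξ.1 + p.2.2 * ξ.2)) := by
      rw [← chr_add, ← chr_add]; congr 1; ring
    rw [e]; ring
  have hfi : Integrable (fun x => ‖f x‖) μ :=
    Integrable.of_bound (C := 1) hf.norm.aestronglyMeasurable
      (Filter.Eventually.of_forall fun x => by rw [norm_norm]; exact hf1 x)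
  have hkb : ∀ a, k a ≤ gaussConst A := by
    intro a
    simp only [hk]
    refine mul_le_of_le_one_right hc (Real.exp_le_one_iff.2 ?_)
    have : 0 ≤ A ^ 2 / 2 * a ^ 2 := by positivity
    linarith
  set Φ : (ℝ × ℝ) × (ℝ × ℝ) → ℝ :=
    fun p => ‖f p.1‖ * (k (p.1.1 - p.2.1) * k (p.1.2 - p.2.2)) with hΦ
  have hΦi : Integrable Φ (μ.prod μ) := by
    refine Integrable.of_bound (C := 1 * (gaussConst A * gaussConst A)) ?_ ?_
    · apply Measurable.aestronglyMeasurable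
      have := hkc.measurable
      simp only [hΦ]; fun_prop
    · filter_upwards with p
      simp only [hΦ]
      rw [Real.norm_of_nonneg (mul_nonneg (norm_nonneg _) (mul_nonneg (hk0 _) (hk0 _)))]
      have := hk0 (p.1.1 - p.2.1); have := hk0 (p.1.2 - p.2.2)
      gcongr
      · exact hf1 _
      · exact hkb _
      · exact hkb _
  have e1 : (∫ ξ, ‖∫ x, H x ξ ∂μ‖ ^ 2 ∂γ) =
      ‖∫ p : (ℝ × ℝ) × (ℝ × ℝ), (∫ ξ, H p.1 ξ * conj (H p.2 ξ) ∂γ) ∂(μ.prod μ)‖ := by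
    rw [← integral_mul_conj_eq μ γ hHm hHm hH1 hH1, ← ofReal_integral_norm_sq, Complex.norm_real,
      Real.norm_of_nonneg]
    exact integral_nonneg fun _ => by positivity
  rw [e1]
  calc _ ≤ ∫ p, Φ p ∂(μ.prod μ) := by
        apply norm_integral_le_of_norm_le hΦi
        filter_upwards with p
        rw [hin, norm_mul, norm_mul, RCLike.norm_conj, Complex.norm_real, Real.norm_of_nonneg
          (mul_nonneg (hk0 _) (hk0 _))]
        simp only [hΦ]
        have := hk0 (p.1.1 - p.2.1); have := hk0 (p.1.2 - p.2.2)
        gcongr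
        exact mul_le_of_le_one_right (norm_nonneg _) (hf1 _)
    _ = ∫ x, ‖f x‖ * ∫ y : ℝ × ℝ, k (x.1 - y.1) * k (x.2 - y.2) ∂μ ∂μ := by
        rw [integral_prod _ hΦi]
        simp only [hΦ, integral_const_mul]
    _ ≤ ∫ x, ‖f x‖ * (4 * Real.pi ^ 2 * Real.exp 1) ∂μ := by
        have hii := hΦi.integral_prod_left
        simp only [hΦ, integral_const_mul] at hii
        apply integral_mono hii (hfi.mul_const _)
        intro x
        have h1 : Integrable (fun y : ℝ × ℝ => k (x.1 - y.1) * k (x.2 - y.2)) :=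
          (hki.comp_sub_left x.1).mul_prod (hki.comp_sub_left x.2)
        refine mul_le_mul_of_nonneg_left ?_ (norm_nonneg _)
        calc _ ≤ ∫ y : ℝ × ℝ, k (x.1 - y.1) * k (x.2 - y.2) :=
              integral_mono_measure hμ
                (Filter.Eventually.of_forall fun y => mul_nonneg (hk0 _) (hk0 _)) h1
          _ = (∫ a, k (x.1 - a)) * ∫ a, k (x.2 - a) :=
              integral_prod_mul (μ := volume) (ν := volume) (fun a => k (x.1 - a))
                (fun a => k (x.2 - a))
          _ = _ := by
              rw [integral_sub_left_eq_self k volume x.1, integral_sub_left_eq_self k volume x.2,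
                hkI]
              rw [show (1 : ℝ) = 1 / 2 + 1 / 2 by norm_num, Real.exp_add]; ring_nf
    _ = _ := by rw [integral_mul_const]; ring

/-- Dispersive decay `|t|^{-2/3}` of the frequency-truncated propagator of `ξ³ + η³`: the kernel
is a product of two one-dimensional Airy integrals. -/
lemma dispersive {A : ℝ} (hA : 0 < A) {t : ℝ} (ht : t ≠ 0) (σ x y : ℝ) :
    ‖∫ ξ, chr (x * ξ.1 + y * ξ.2 + t * (σ + ξ.1 ^ 3 + ξ.2 ^ 3)) ∂(boxMeasure A)‖ ≤
      196 * |t| ^ (-(2:ℝ)/3) := by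
  have e : ∀ ξ : ℝ × ℝ, chr (x * ξ.1 + y * ξ.2 + t * (σ + ξ.1 ^ 3 + ξ.2 ^ 3)) =
      chr (t * σ) * (chr (x * ξ.1 + t * ξ.1 ^ 3) * chr (y * ξ.2 + t * ξ.2 ^ 3)) := by
    intro ξ
    rw [← chr_add, ← chr_add]; congr 1; ring
  simp_rw [e]
  rw [integral_const_mul, norm_mul, norm_chr, one_mul, boxMeasure,
    integral_prod_mul (fun ξ => chr (x * ξ + t * ξ ^ 3)) (fun ξ => chr (y * ξ + t * ξ ^ 3)),
    norm_mul, ← intervalIntegral.integral_of_le (by linarith),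
    ← intervalIntegral.integral_of_le (by linarith)]
  calc _ ≤ (14 * |t| ^ (-(1:ℝ)/3)) * (14 * |t| ^ (-(1:ℝ)/3)) :=
        mul_le_mul (airy_bound ht hA.le) (airy_bound ht hA.le) (norm_nonneg _) (by positivity)
    _ = _ := by
        rw [show (-(2:ℝ)/3) = -(1:ℝ)/3 + -(1:ℝ)/3 by norm_num, Real.rpow_add (abs_pos.2 ht)]
        ring

/-- Dual Strichartz estimate for the surface `τ = σ + ξ³ + η³`, before optimizing in `s`. -/
lemma free_strichartz {A : ℝ} (hA : 0 < A) (σ : ℝ)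
    (μ₁ : Measure ℝ) [IsFiniteMeasure μ₁] (hμ₁ : μ₁ ≤ volume)
    (μ₂ : Measure (ℝ × ℝ)) [IsFiniteMeasure μ₂] (hμ₂ : μ₂ ≤ volume)
    {g : ℝ × ℝ × ℝ → ℂ} (hg : Measurable g) (hg1 : ∀ x, ‖g x‖ ≤ 1) {s : ℝ} (hs : 0 < s) :
    ∫ ξ, ‖∫ t, ∫ x, g (t, x) * chr (x.1 * ξ.1 + x.2 * ξ.2 + t * (σ + ξ.1 ^ 3 + ξ.2 ^ 3))
        ∂μ₂ ∂μ₁‖ ^ 2 ∂(boxMeasure A) ≤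
      2 * (4 * Real.pi ^ 2 * Real.exp 1) * s * (∫ t, ∫ x, ‖g (t, x)‖ ∂μ₂ ∂μ₁) +
        196 * s ^ (-(2:ℝ)/3) * (∫ t, ∫ x, ‖g (t, x)‖ ∂μ₂ ∂μ₁) ^ 2 := by
  have hu : ∀ t, Measurable fun x => g (t, x) := fun t => hg.comp measurable_prodMk_left
  have hP : Measurable (Function.uncurry fun (x : ℝ × ℝ) (q : ℝ × ℝ × ℝ) =>
      g (q.1, x) * chr (x.1 * q.2.1 + x.2 * q.2.2 + q.1 * (σ + q.2.1 ^ 3 + q.2.2 ^ 3))) := by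
    have h1 : Measurable fun z : (ℝ × ℝ) × (ℝ × ℝ × ℝ) => g (z.2.1, z.1) :=
      hg.comp (by fun_prop)
    simp only [Function.uncurry_def]
    fun_prop
  have hPt : ∀ t, Measurable (Function.uncurry fun (x ξ : ℝ × ℝ) =>
      g (t, x) * chr (x.1 * ξ.1 + x.2 * ξ.2 + t * (σ + ξ.1 ^ 3 + ξ.2 ^ 3))) := fun t => by
    have := hu t
    simp only [Function.uncurry_def]
    fun_prop
  have hP1 : ∀ t (x ξ : ℝ × ℝ),
      ‖g (t, x) * chr (x.1 * ξ.1 + x.2 * ξ.2 + t * (σ + ξ.1 ^ 3 + ξ.2 ^ 3))‖ ≤ 1 := by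
    intro t x ξ; rw [norm_mul, norm_chr, mul_one]; exact hg1 _
  have hgi : ∀ t, Integrable (fun x => ‖g (t, x)‖) μ₂ := fun t =>
    Integrable.of_bound (C := 1) (hu t).norm.aestronglyMeasurable
      (Filter.Eventually.of_forall fun x => by rw [norm_norm]; exact hg1 _)
  refine time_tt μ₁ hμ₁ (boxMeasure A)
    (H := fun t ξ => ∫ x, g (t, x) *
      chr (x.1 * ξ.1 + x.2 * ξ.2 + t * (σ + ξ.1 ^ 3 + ξ.2 ^ 3)) ∂μ₂)
    (measurable_integral_left μ₂ hP) (K := 1 * μ₂.real Set.univ)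
    (fun t ξ => norm_integral_le_mul_real μ₂ fun x => hP1 t x ξ)
    (m := fun t => ∫ x, ‖g (t, x)‖ ∂μ₂) ?_
    (fun t => integral_nonneg fun _ => norm_nonneg _) (K' := 1 * μ₂.real Set.univ) ?_
    (by positivity) (by norm_num) hs ?_ ?_
  · have : StronglyMeasurable (Function.uncurry fun t x => ‖g (t, x)‖) :=
      hg.norm.stronglyMeasurable
    exact this.integral_prod_right.measurable
  · intro t
    refine (le_abs_self _).trans ?_
    rw [← Real.norm_eq_abs]
    refine norm_integral_le_of_norm_le_const (Filter.Eventually.of_forall fun x => ?_)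
    rw [norm_norm]; exact hg1 _
  · intro t
    refine le_trans (le_of_eq ?_) (bessel hA μ₂ hμ₂ (hu t) fun x => hg1 _)
    congr 1; ext ξ
    congr 1
    have : ∀ x : ℝ × ℝ, g (t, x) * chr (x.1 * ξ.1 + x.2 * ξ.2 + t * (σ + ξ.1 ^ 3 + ξ.2 ^ 3)) =
        g (t, x) * chr (x.1 * ξ.1 + x.2 * ξ.2) * chr (t * (σ + ξ.1 ^ 3 + ξ.2 ^ 3)) := by
      intro x; rw [chr_add]; ring
    simp_rw [this]
    rw [integral_mul_const, norm_mul, norm_chr, mul_one]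
  · intro t t' htt
    rw [integral_mul_conj_eq μ₂ (boxMeasure A) (hPt t) (hPt t') (hP1 t) (hP1 t'),
      ← integral_prod_mul, ← integral_const_mul]
    apply norm_integral_le_of_norm_le (((hgi t).mul_prod (hgi t')).const_mul _)
    filter_upwards with p
    have : ∀ ξ : ℝ × ℝ,
        g (t, p.1) * chr (p.1.1 * ξ.1 + p.1.2 * ξ.2 + t * (σ + ξ.1 ^ 3 + ξ.2 ^ 3)) *
        conj (g (t', p.2) * chr (p.2.1 * ξ.1 + p.2.2 * ξ.2 + t' * (σ + ξ.1 ^ 3 + ξ.2 ^ 3))) =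
        g (t, p.1) * conj (g (t', p.2)) * chr ((p.1.1 - p.2.1) * ξ.1 + (p.1.2 - p.2.2) * ξ.2 +
          (t - t') * (σ + ξ.1 ^ 3 + ξ.2 ^ 3)) := by
      intro ξ
      have e : chr ((p.1.1 - p.2.1) * ξ.1 + (p.1.2 - p.2.2) * ξ.2 +
          (t - t') * (σ + ξ.1 ^ 3 + ξ.2 ^ 3)) =
          chr (p.1.1 * ξ.1 + p.1.2 * ξ.2 + t * (σ + ξ.1 ^ 3 + ξ.2 ^ 3)) *
          chr (-(p.2.1 * ξ.1 + p.2.2 * ξ.2 + t' * (σ + ξ.1 ^ 3 + ξ.2 ^ 3))) := by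
        rw [← chr_add]; congr 1; ring
      rw [map_mul, conj_chr, e]; ring
    simp_rw [this]
    rw [integral_const_mul, norm_mul, norm_mul, RCLike.norm_conj, mul_comm]
    gcongr
    exact dispersive hA (sub_ne_zero.2 htt) σ _ _

/-! ### The space-time Fourier transform of a Schwartz function -/

/-- The Euclidean pairing of `(t, x, y)` with `(τ, ξ, η)`. -/
def dot (z ζ : ℝ × ℝ × ℝ) : ℝ := z.1 * ζ.1 + z.2.1 * ζ.2.1 + z.2.2 * ζ.2.2

@[fun_prop] lemma continuous_dot : Continuous fun p : (ℝ × ℝ × ℝ) × (ℝ × ℝ × ℝ) => dot p.1 p.2 := by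
  unfold dot; fun_prop

lemma dot_comm (z ζ : ℝ × ℝ × ℝ) : dot z ζ = dot ζ z := by unfold dot; ring

lemma dot_smul (r : ℝ) (z ζ : ℝ × ℝ × ℝ) : dot z (r • ζ) = r * dot z ζ := by
  simp only [dot, Prod.smul_fst, Prod.smul_snd, smul_eq_mul]; ring

/-- The space-time Fourier transform of a Schwartz function as a function on `ℝ × ℝ × ℝ`. -/
def ft (u : SchwartzMap (ℝ × ℝ × ℝ) ℂ) (ζ : ℝ × ℝ × ℝ) : ℂ :=
  ftt (fun t x y => u (t, x, y)) ζ.1 ζ.2.1 ζ.2.2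

instance isAddHaar2 : (volume : Measure (ℝ × ℝ)).IsAddHaarMeasure :=
  inferInstanceAs ((volume : Measure ℝ).prod (volume : Measure ℝ)).IsAddHaarMeasure

instance isAddHaar3 : (volume : Measure (ℝ × ℝ × ℝ)).IsAddHaarMeasure :=
  inferInstanceAs ((volume : Measure ℝ).prod (volume : Measure (ℝ × ℝ))).IsAddHaarMeasure

lemma ft_eq (u : SchwartzMap (ℝ × ℝ × ℝ) ℂ) (ζ : ℝ × ℝ × ℝ) :
    ft u ζ = ∫ z, chr (dot z ζ) * u z := by
  have hi : Integrable (fun z => chr (dot z ζ) * u z) := by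
    refine (u.integrable).bdd_mul (c := 1) ?_ ?_
    · exact Continuous.aestronglyMeasurable (by fun_prop)
    · filter_upwards with z; simp
  rw [Measure.volume_eq_prod, integral_prod _ (by rwa [← Measure.volume_eq_prod])]
  unfold ft ftt
  rw [Measure.volume_eq_prod] at hi
  have h2 := hi.prod_right_ae
  apply integral_congr_ae
  filter_upwards [h2] with t ht
  rw [Measure.volume_eq_prod, integral_prod _ (by rwa [← Measure.volume_eq_prod])]
  rfl

/-- `ℝ × ℝ × ℝ` with its Euclidean inner product. The product type carries the sup norm, whereas
Mathlib's Fourier inversion and Plancherel theorems are stated on inner product spaces. -/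
abbrev E3 := WithLp 2 (ℝ × WithLp 2 (ℝ × ℝ))

/-- The identity map from the Euclidean model to `ℝ × ℝ × ℝ`. -/
def e3 : E3 ≃L[ℝ] ℝ × ℝ × ℝ :=
  (WithLp.prodContinuousLinearEquiv 2 ℝ ℝ (WithLp 2 (ℝ × ℝ))).trans
    ((ContinuousLinearEquiv.refl ℝ ℝ).prodCongr (WithLp.prodContinuousLinearEquiv 2 ℝ ℝ ℝ))

lemma e3_mp : MeasurePreserving (e3 : E3 → ℝ × ℝ × ℝ) := by
  have h1 := WithLp.volume_preserving_ofLp ℝ (WithLp 2 (ℝ × ℝ))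
  have h2 := (MeasurePreserving.id (volume : Measure ℝ)).prod (WithLp.volume_preserving_ofLp ℝ ℝ)
  exact h2.comp h1

lemma e3_emb : MeasurableEmbedding (e3 : E3 → ℝ × ℝ × ℝ) :=
  e3.toHomeomorph.measurableEmbedding

lemma e3_inner (x y : E3) : inner ℝ x y = dot (e3 x) (e3 y) := by
  rw [WithLp.prod_inner_apply, WithLp.prod_inner_apply]
  simp [e3, dot]
  ring

open scoped FourierTransform in
/-- Regularity, inversion and Plancherel for `ft`, transported from Mathlib's Fourier transform on
`E3`. Mathlib's character is `e^{-2πi⟨·,·⟩}`, which accounts for the factor `c = (2π)⁻³`. -/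
lemma fourier_facts (u : SchwartzMap (ℝ × ℝ × ℝ) ℂ) :
    ∃ c : ℝ, c = ((2 * Real.pi) ^ 3)⁻¹ ∧ Continuous (ft u) ∧ Integrable (ft u) ∧
      Integrable (fun ζ => ‖ft u ζ‖ ^ 2) ∧
      (∀ z, u z = c * ∫ ζ, chr (-dot z ζ) * ft u ζ) ∧
      ∫ ζ, ‖ft u ζ‖ ^ 2 = c⁻¹ * ∫ z, ‖u z‖ ^ 2 := by
  set v : SchwartzMap E3 ℂ := SchwartzMap.compCLMOfContinuousLinearEquiv ℂ e3 u with hv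
  have hvu : ∀ x, v x = u (e3 x) := fun x => rfl
  set G : SchwartzMap (ℝ × ℝ × ℝ) ℂ :=
    SchwartzMap.compCLMOfContinuousLinearEquiv ℂ e3.symm (𝓕 v) with hG
  have hGv : ∀ x, G (e3 x) = 𝓕 v x := fun x => by
    simp [hG]
  have hGF : ∀ ζ, G ζ = ft u ((2 * Real.pi) • ζ) := by
    intro ζ
    obtain ⟨w, rfl⟩ := e3.surjective ζ
    rw [hGv, ft_eq, SchwartzMap.fourier_coe, Real.fourier_eq',
      ← e3_mp.integral_comp e3_emb]
    congr 1; ext x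
    rw [hvu, dot_smul, e3_inner, smul_eq_mul, chr]
    congr 2; push_cast; ring
  have hpi : (2 * Real.pi) ≠ 0 := by positivity
  have hFG : ∀ ζ, ft u ζ = G ((2 * Real.pi)⁻¹ • ζ) := by
    intro ζ; rw [hGF, smul_inv_smul₀ hpi]
  have hFG' : ft u = fun ζ => G ((2 * Real.pi)⁻¹ • ζ) := funext hFG
  have hfr : Module.finrank ℝ (ℝ × ℝ × ℝ) = 3 := by simp
  have hcs : ∀ {T : Type} [NormedAddCommGroup T] [NormedSpace ℝ T] (f : ℝ × ℝ × ℝ → T),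
      ∫ ζ, f ((2 * Real.pi) • ζ) = ((2 * Real.pi) ^ 3)⁻¹ • ∫ ζ, f ζ := by
    intro T _ _ f
    rw [Measure.integral_comp_smul, hfr, abs_of_nonneg (by positivity)]
  have hG2 : Integrable (fun ζ => ‖G ζ‖ ^ 2) := by
    have := (G.memLp 2).integrable_norm_pow (by norm_num)
    simpa using this
  refine ⟨_, rfl, ?_, ?_, ?_, ?_, ?_⟩
  · rw [hFG']; fun_prop
  · rw [hFG']; exact G.integrable.comp_smul (inv_ne_zero hpi)
  · rw [hFG']; exact hG2.comp_smul (inv_ne_zero hpi)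
  · intro z
    obtain ⟨x, rfl⟩ := e3.surjective z
    have h1 : v x = ∫ w, Complex.exp ((↑(2 * Real.pi * inner ℝ w x) * Complex.I)) • 𝓕 v w := by
      have h2 : 𝓕⁻ (𝓕 v) = v := FourierTransform.fourierInv_fourier_eq v
      conv_lhs => rw [← h2]
      rw [SchwartzMap.fourierInv_coe, Real.fourierInv_eq']
    have h2 := hcs (fun ζ => chr (-dot (e3 x) ζ) * ft u ζ)
    rw [← hvu, h1]
    rw [← Complex.real_smul, ← h2, ← e3_mp.integral_comp e3_emb]
    congr 1; ext w
    rw [← hGF, hGv, dot_smul, e3_inner, smul_eq_mul, chr, dot_comm]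
    congr 2; push_cast; ring
  · rw [inv_inv]
    have h1 := hcs (fun ζ => ‖ft u ζ‖ ^ 2)
    have h3 : ∫ ζ, ‖ft u ((2 * Real.pi) • ζ)‖ ^ 2 = ∫ z, ‖u z‖ ^ 2 := by
      have h4 := SchwartzMap.integral_norm_sq_fourier v
      simp only [hvu] at h4
      rw [← e3_mp.integral_comp e3_emb, ← e3_mp.integral_comp e3_emb, ← h4]
      congr 1; ext w
      rw [← hGF, hGv]
    rw [← h3, h1, smul_eq_mul, mul_inv_cancel_left₀ (by positivity)]

/-! ### Shear coordinates and the Bernstein bound -/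

/-- The measure-preserving change of variables `τ = σ + ξ³ + η³`. -/
lemma lintegral_shear {h : ℝ × ℝ × ℝ → ℝ≥0∞} (hh : Measurable h) :
    ∫⁻ ζ, h ζ = ∫⁻ σ : ℝ, ∫⁻ ξ : ℝ × ℝ, h (σ + ξ.1 ^ 3 + ξ.2 ^ 3, ξ) := by
  have hsw : ∫⁻ σ : ℝ, ∫⁻ ξ : ℝ × ℝ, h (σ + ξ.1 ^ 3 + ξ.2 ^ 3, ξ) =
      ∫⁻ ξ : ℝ × ℝ, ∫⁻ σ : ℝ, h (σ + ξ.1 ^ 3 + ξ.2 ^ 3, ξ) := by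
    apply lintegral_lintegral_swap
    apply Measurable.aemeasurable
    fun_prop
  rw [hsw, Measure.volume_eq_prod, lintegral_prod_symm _ hh.aemeasurable]
  · congr 1; ext ξ
    simp only [add_assoc]
    rw [lintegral_add_right_eq_self (fun τ => h (τ, ξ))]

lemma lintegral_mul_sq_le {α : Type*} [MeasurableSpace α] {μ : Measure α} {f g : α → ℝ≥0∞}
    (hf : AEMeasurable f μ) (hg : AEMeasurable g μ) :
    (∫⁻ x, f x * g x ∂μ) ^ 2 ≤ (∫⁻ x, f x ^ 2 ∂μ) * ∫⁻ x, g x ^ 2 ∂μ := by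
  have h := ENNReal.lintegral_mul_le_Lp_mul_Lq μ (p := 2) (q := 2) (by constructor <;> norm_num) hf hg
  have h2 := pow_le_pow_left' h 2
  simp only [Pi.mul_apply, ENNReal.rpow_ofNat, mul_pow] at h2
  refine h2.trans (le_of_eq ?_)
  rw [← ENNReal.rpow_ofNat, ← ENNReal.rpow_ofNat, ← ENNReal.rpow_mul, ← ENNReal.rpow_mul]
  norm_num

/-- Cauchy–Schwarz for a function `F` supported where `|τ - ξ³ - η³| ≤ 2L` and `(ξ, η) ∈ P`,
written in the sheared variable `σ = τ - ξ³ - η³`. -/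
lemma cs_support {F : ℝ × ℝ × ℝ → ℂ} (hF : Continuous F) {h : ℝ × ℝ × ℝ → ℝ≥0∞}
    (hh : Measurable h) {L : ℝ} {P : Set (ℝ × ℝ)} (hP : MeasurableSet P)
    (hsupp : ∀ ζ, F ζ ≠ 0 → ζ.2 ∈ P ∧ |ζ.1 - ζ.2.1 ^ 3 - ζ.2.2 ^ 3| ≤ 2 * L) :
    (∫⁻ ζ, ‖F ζ‖ₑ * h ζ) ^ 2 ≤ (∫⁻ ζ, ‖F ζ‖ₑ ^ 2) *
      ∫⁻ σ in Set.Icc (-(2 * L)) (2 * L), ∫⁻ ξ in P, h (σ + ξ.1 ^ 3 + ξ.2 ^ 3, ξ) ^ 2 := by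
  set S : Set (ℝ × ℝ × ℝ) := {ζ | ζ.2 ∈ P ∧ |ζ.1 - ζ.2.1 ^ 3 - ζ.2.2 ^ 3| ≤ 2 * L} with hS
  have hSm : MeasurableSet S := by
    apply MeasurableSet.inter
    · exact measurable_snd hP
    · exact measurableSet_le (f := fun ζ : ℝ × ℝ × ℝ => |ζ.1 - ζ.2.1 ^ 3 - ζ.2.2 ^ 3|)
        (by fun_prop) measurable_const
  have h1 : ∫⁻ ζ, ‖F ζ‖ₑ * h ζ = ∫⁻ ζ, ‖F ζ‖ₑ * S.indicator h ζ := by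
    congr 1; ext ζ
    by_cases hz : F ζ = 0
    · simp [hz]
    · rw [Set.indicator_of_mem]
      exact hsupp ζ hz
  rw [h1]
  refine (lintegral_mul_sq_le (hF.measurable.enorm.aemeasurable)
    (hh.indicator hSm).aemeasurable).trans ?_
  gcongr
  rw [lintegral_shear ((hh.indicator hSm).pow_const 2), ← lintegral_indicator measurableSet_Icc]
  refine le_of_eq ?_
  congr 1; ext σ
  by_cases hσ : σ ∈ Set.Icc (-(2 * L)) (2 * L)
  · rw [Set.indicator_of_mem hσ, ← lintegral_indicator hP]
    congr 1; ext ξ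
    by_cases hξ : ξ ∈ P
    · rw [Set.indicator_of_mem hξ, Set.indicator_of_mem]
      refine ⟨hξ, ?_⟩
      rw [abs_le]
      constructor <;> simp <;> linarith [hσ.1, hσ.2]
    · rw [Set.indicator_of_notMem hξ, Set.indicator_of_notMem]
      · simp
      · exact fun hc => hξ hc.1
  · rw [Set.indicator_of_notMem hσ]
    convert lintegral_zero with ξ
    rw [Set.indicator_of_notMem]
    · simp
    · intro hc
      apply hσ
      have := hc.2
      rw [abs_le] at this
      simp only at this
      constructor <;> linarith [this.1, this.2]

lemma measurableSet_strip {N M : ℝ} :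
    MeasurableSet {ξ : ℝ × ℝ | |ξ.1| ≤ 2 * N ∧ |ξ.1 + ξ.2| ≤ 2 * M} :=
  MeasurableSet.inter
    (measurableSet_le (f := fun ξ : ℝ × ℝ => |ξ.1|) (by fun_prop) measurable_const)
    (measurableSet_le (f := fun ξ : ℝ × ℝ => |ξ.1 + ξ.2|) (by fun_prop) measurable_const)

lemma volume_strip {N M : ℝ} :
    volume {ξ : ℝ × ℝ | |ξ.1| ≤ 2 * N ∧ |ξ.1 + ξ.2| ≤ 2 * M} ≤
      ENNReal.ofReal (4 * N) * ENNReal.ofReal (4 * M) := by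
  rw [Measure.volume_eq_prod, Measure.prod_apply measurableSet_strip]
  calc _ ≤ ∫⁻ ξ : ℝ, (Set.Icc (-(2 * N)) (2 * N)).indicator (fun _ => ENNReal.ofReal (4 * M)) ξ := by
        apply lintegral_mono
        intro ξ
        by_cases hξ : ξ ∈ Set.Icc (-(2 * N)) (2 * N)
        · rw [Set.indicator_of_mem hξ]
          calc _ ≤ volume (Set.Icc (-(2 * M) - ξ) (2 * M - ξ)) := by
                apply measure_mono
                rintro η ⟨_, h2⟩
                rw [abs_le] at h2
                simp only at h2
                constructor <;> linarith [h2.1, h2.2]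
            _ ≤ _ := by
                rw [Real.volume_Icc]; apply le_of_eq; congr 1; ring
        · rw [Set.indicator_of_notMem hξ]
          refine (measure_mono_null (t := ∅) ?_ measure_empty).le
          rintro η ⟨h1, _⟩
          exact (hξ (abs_le.1 h1)).elim
    _ = _ := by
        rw [lintegral_indicator measurableSet_Icc, setLIntegral_const, Real.volume_Icc, mul_comm]
        congr 2; ring

lemma lintegral_enorm_sq {α : Type*} [MeasurableSpace α] {μ : Measure α} {f : α → ℂ}
    (hf : Integrable (fun x => ‖f x‖ ^ 2) μ) :
    ∫⁻ x, ‖f x‖ₑ ^ 2 ∂μ = ENNReal.ofReal (∫ x, ‖f x‖ ^ 2 ∂μ) := by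
  rw [ofReal_integral_eq_lintegral_ofReal hf (by filter_upwards with x; positivity)]
  congr 1; ext x
  rw [ENNReal.ofReal_pow (norm_nonneg _), ofReal_norm]

/-- Bernstein's inequality: the frequency support has measure at most `64 N M L`. -/
lemma sup_bound {N M L : ℝ} (hN : 0 < N) (hM : 0 < M) (hL : 0 < L)
    (u : SchwartzMap (ℝ × ℝ × ℝ) ℂ)
    (hsupp : ∀ ζ, ft u ζ ≠ 0 → (|ζ.2.1| ≤ 2 * N ∧ |ζ.2.1 + ζ.2.2| ≤ 2 * M) ∧
      |ζ.1 - ζ.2.1 ^ 3 - ζ.2.2 ^ 3| ≤ 2 * L) (z : ℝ × ℝ × ℝ) :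
    ‖u z‖ ^ 2 ≤ 64 * (N * M * L) * ∫ z, ‖u z‖ ^ 2 := by
  obtain ⟨c, hc, hcont, hInt, hInt2, hinv, hpl⟩ := fourier_facts u
  have hc0 : 0 < c := by rw [hc]; positivity
  have hc1 : c ≤ 1 := by
    rw [hc]; apply inv_le_one_of_one_le₀
    apply one_le_pow₀; linarith [Real.pi_gt_three]
  have h1 := cs_support hcont (h := fun _ => 1) measurable_const (L := L)
    (P := {ξ : ℝ × ℝ | |ξ.1| ≤ 2 * N ∧ |ξ.1 + ξ.2| ≤ 2 * M})
    measurableSet_strip hsupp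
  simp only [mul_one, one_pow, lintegral_const, MeasurableSet.univ, Measure.restrict_apply,
    Set.univ_inter, one_mul, Real.volume_Icc] at h1
  have h2 : ‖u z‖ₑ ≤ ENNReal.ofReal c * ∫⁻ ζ, ‖ft u ζ‖ₑ := by
    rw [hinv z, enorm_mul]
    gcongr
    · rw [← ofReal_norm, Complex.norm_real, Real.norm_of_nonneg hc0.le]
    · refine (enorm_integral_le_lintegral_enorm _).trans (le_of_eq ?_)
      congr 1; ext ζ
      rw [enorm_mul, ← ofReal_norm (chr _), norm_chr]; simp
  have hA : 0 ≤ ∫ z, ‖u z‖ ^ 2 := integral_nonneg fun _ => by positivity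
  have h3 : ‖u z‖ₑ ^ 2 ≤ ENNReal.ofReal (c ^ 2 * ((c⁻¹ * ∫ z, ‖u z‖ ^ 2) *
      ((4 * N) * (4 * M) * (4 * L)))) := by
    calc ‖u z‖ₑ ^ 2 ≤ (ENNReal.ofReal c * ∫⁻ ζ, ‖ft u ζ‖ₑ) ^ 2 := by gcongr
      _ ≤ ENNReal.ofReal c ^ 2 * ((∫⁻ ζ, ‖ft u ζ‖ₑ ^ 2) *
        (ENNReal.ofReal (4 * N) * ENNReal.ofReal (4 * M) * ENNReal.ofReal (4 * L))) := by
          rw [mul_pow]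
          gcongr
          refine h1.trans ?_
          gcongr
          · exact volume_strip
          · apply le_of_eq; ring
      _ = _ := by
          rw [lintegral_enorm_sq hInt2, hpl, ENNReal.ofReal_mul (by positivity : 0 ≤ c ^ 2),
            ENNReal.ofReal_pow hc0.le,
            ENNReal.ofReal_mul (by positivity : 0 ≤ c⁻¹ * ∫ z, ‖u z‖ ^ 2),
            ENNReal.ofReal_mul (by positivity : 0 ≤ 4 * N * (4 * M)),
            ENNReal.ofReal_mul (by positivity : 0 ≤ 4 * N)]
  rw [← ofReal_norm, ← ENNReal.ofReal_pow (norm_nonneg _),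
    ENNReal.ofReal_le_ofReal_iff (by positivity)] at h3
  refine h3.trans ?_
  have : c ^ 2 * ((c⁻¹ * ∫ z, ‖u z‖ ^ 2) * ((4 * N) * (4 * M) * (4 * L))) =
    c * (64 * (N * M * L) * ∫ z, ‖u z‖ ^ 2) := by field_simp; ring
  rw [this]
  exact mul_le_of_le_one_left (by positivity) hc1

/-! ### Weak-type `L⁵` bound -/

lemma restrict_square_le {N : ℝ} (hN : 0 < N) :
    (volume : Measure (ℝ × ℝ)).restrict {ξ | |ξ.1| ≤ 2 * N ∧ |ξ.2| ≤ 2 * N} ≤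
      boxMeasure (3 * N) := by
  unfold boxMeasure
  rw [Measure.prod_restrict, ← Measure.volume_eq_prod]
  apply Measure.restrict_mono _ le_rfl
  rintro ξ ⟨h1, h2⟩
  rw [abs_le] at h1 h2
  constructor <;> constructor <;> linarith [h1.1, h1.2, h2.1, h2.2]

lemma measurableSet_square {N : ℝ} :
    MeasurableSet {ξ : ℝ × ℝ | |ξ.1| ≤ 2 * N ∧ |ξ.2| ≤ 2 * N} :=
  MeasurableSet.inter
    (measurableSet_le (f := fun ξ : ℝ × ℝ => |ξ.1|) (by fun_prop) measurable_const)
    (measurableSet_le (f := fun ξ : ℝ × ℝ => |ξ.2|) (by fun_prop) measurable_const)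

lemma measurable_ghat (μ : Measure (ℝ × ℝ × ℝ)) [SFinite μ] {g : ℝ × ℝ × ℝ → ℂ}
    (hg : Measurable g) : Measurable fun ζ => ∫ z, g z * chr (dot z ζ) ∂μ := by
  apply measurable_integral_left μ (H := fun z ζ => g z * chr (dot z ζ))
  have := continuous_dot.measurable
  exact (hg.comp measurable_fst).mul (measurable_chr.comp this)

/-- Restriction of the Fourier transform of `g` to the thickened surface
`|τ - ξ³ - η³| ≤ 2L`: the estimate of `free_strichartz` integrated over `|σ| ≤ 2L`. -/
lemma ghat_bound {N L : ℝ} (hN : 0 < N) (hL : 0 < L)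
    (μ₁ : Measure ℝ) [IsFiniteMeasure μ₁] (hμ₁ : μ₁ ≤ volume)
    (μ₂ : Measure (ℝ × ℝ)) [IsFiniteMeasure μ₂] (hμ₂ : μ₂ ≤ volume)
    {g : ℝ × ℝ × ℝ → ℂ} (hg : Measurable g) (hg1 : ∀ x, ‖g x‖ ≤ 1) {s : ℝ} (hs : 0 < s) :
    ∫⁻ σ in Set.Icc (-(2 * L)) (2 * L),
      ∫⁻ ξ in {ξ : ℝ × ℝ | |ξ.1| ≤ 2 * N ∧ |ξ.2| ≤ 2 * N},
        ‖∫ z, g z * chr (dot z (σ + ξ.1 ^ 3 + ξ.2 ^ 3, ξ)) ∂(μ₁.prod μ₂)‖ₑ ^ 2 ≤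
    ENNReal.ofReal (4 * L * (2 * (4 * Real.pi ^ 2 * Real.exp 1) * s *
      (∫ z, ‖g z‖ ∂(μ₁.prod μ₂)) +
      196 * s ^ (-(2 : ℝ) / 3) * (∫ z, ‖g z‖ ∂(μ₁.prod μ₂)) ^ 2)) := by
  set B := (2 * (4 * Real.pi ^ 2 * Real.exp 1) * s *
      (∫ z, ‖g z‖ ∂(μ₁.prod μ₂)) +
      196 * s ^ (-(2 : ℝ) / 3) * (∫ z, ‖g z‖ ∂(μ₁.prod μ₂)) ^ 2) with hB
  have hgi : Integrable g (μ₁.prod μ₂) :=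
    Integrable.of_bound hg.aestronglyMeasurable 1 (Filter.Eventually.of_forall hg1)
  have key : ∀ σ : ℝ, ∫⁻ ξ in {ξ : ℝ × ℝ | |ξ.1| ≤ 2 * N ∧ |ξ.2| ≤ 2 * N},
        ‖∫ z, g z * chr (dot z (σ + ξ.1 ^ 3 + ξ.2 ^ 3, ξ)) ∂(μ₁.prod μ₂)‖ₑ ^ 2 ≤
        ENNReal.ofReal B := by
    intro σ
    refine (lintegral_mono' (restrict_square_le hN) le_rfl).trans ?_
    have hm : Measurable fun ξ : ℝ × ℝ =>
        ∫ z, g z * chr (dot z (σ + ξ.1 ^ 3 + ξ.2 ^ 3, ξ)) ∂(μ₁.prod μ₂) :=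
      (measurable_ghat (μ₁.prod μ₂) hg).comp
        (g := fun ζ => ∫ z, g z * chr (dot z ζ) ∂(μ₁.prod μ₂))
        (f := fun ξ : ℝ × ℝ => (σ + ξ.1 ^ 3 + ξ.2 ^ 3, ξ)) (by fun_prop)
    rw [lintegral_enorm_sq]
    · apply ENNReal.ofReal_le_ofReal
      have h := free_strichartz (A := 3 * N) (by positivity) σ μ₁ hμ₁ μ₂ hμ₂ hg hg1 hs
      rw [← integral_prod (f := fun z => ‖g z‖) hgi.norm, ← hB] at h
      refine le_trans (le_of_eq ?_) h
      congr 1; ext ξ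
      rw [integral_prod]
      · congr 3; ext t; congr 1; ext x; congr 2
        simp only [dot]; ring
      · refine hgi.mul_bdd (c := 1) ?_ ?_
        · exact Continuous.aestronglyMeasurable (by fun_prop)
        · filter_upwards with z; simp
    · refine Integrable.of_bound (hm.norm.pow_const 2).aestronglyMeasurable
        (((μ₁.prod μ₂).real Set.univ) ^ 2) (Filter.Eventually.of_forall fun ξ => ?_)
      rw [norm_pow, norm_norm]
      gcongr
      refine (norm_integral_le_mul_real _ (K := 1) fun z => ?_).trans (by simp)
      simpa using hg1 z
  calc _ ≤ ∫⁻ σ in Set.Icc (-(2 * L)) (2 * L), ENNReal.ofReal B := lintegral_mono key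
    _ = _ := by
      rw [setLIntegral_const, Real.volume_Icc, mul_comm, ← ENNReal.ofReal_mul (by linarith)]
      congr 2; ring

/-- The constant of the weak-type estimate, `4L` being the length of the range of `σ`. -/
def weakConst : ℝ := 4 * (2 * (4 * Real.pi ^ 2 * Real.exp 1) + 196)

lemma weakConst_pos : 0 < weakConst := by unfold weakConst; positivity

lemma superlevel_bounded (u : SchwartzMap (ℝ × ℝ × ℝ) ℂ) {lam : ℝ} (hl : 0 < lam) :
    ∃ R : ℝ, {z | lam < ‖u z‖} ⊆ Metric.closedBall (0 : ℝ × ℝ × ℝ) R := by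
  have h := u.tendsto_cocompact.norm
  rw [norm_zero] at h
  have h2 := h.eventually (gt_mem_nhds hl)
  obtain ⟨K, hK, hKs⟩ := Filter.mem_cocompact.1 h2
  obtain ⟨R, hR⟩ := hK.isBounded.subset_closedBall 0
  refine ⟨R, fun z hz => hR ?_⟩
  by_contra hc
  have := hKs hc
  simp only [Set.mem_ofPred_eq] at this hz
  linarith

/-- Weak-type `L⁵` estimate `‖u‖_{L^{5,∞}} ≲ L^{1/2} ‖u‖_{L²}`, obtained by pairing `u` with the
phase of `u` on a superlevel set. -/
lemma weak_bound {N L : ℝ} (hN : 0 < N) (hL : 0 < L)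
    (u : SchwartzMap (ℝ × ℝ × ℝ) ℂ)
    (hsupp : ∀ ζ, ft u ζ ≠ 0 → (|ζ.2.1| ≤ 2 * N ∧ |ζ.2.2| ≤ 2 * N) ∧
      |ζ.1 - ζ.2.1 ^ 3 - ζ.2.2 ^ 3| ≤ 2 * L) {lam : ℝ} (hl : 0 < lam) :
    volume {z | lam < ‖u z‖} ≤
      ENNReal.ofReal ((weakConst * L * ∫ z, ‖u z‖ ^ 2) ^ ((5 : ℝ) / 2) * lam ^ (-(5 : ℝ))) := by
  obtain ⟨c, hc, hcont, hInt, hInt2, hinv, hpl⟩ := fourier_facts u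
  have hc0 : 0 < c := by rw [hc]; positivity
  have hc1 : c ≤ 1 := by
    rw [hc]; apply inv_le_one_of_one_le₀
    apply one_le_pow₀; linarith [Real.pi_gt_three]
  set A := ∫ z, ‖u z‖ ^ 2 with hAdef
  have hA : 0 ≤ A := integral_nonneg fun _ => by positivity
  obtain ⟨R, hR⟩ := superlevel_bounded u hl
  set E := {z | lam < ‖u z‖} with hE
  have hEm : MeasurableSet E := (isOpen_lt continuous_const u.continuous.norm).measurableSet
  have hEfin : volume E ≠ ⊤ :=
    ((measure_mono hR).trans_lt (isCompact_closedBall _ _).measure_lt_top).ne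
  set G := volume.real E with hGdef
  rw [← ofReal_measureReal hEfin, ← hGdef]
  apply ENNReal.ofReal_le_ofReal
  have hGnn : 0 ≤ G := measureReal_nonneg
  rcases hGnn.eq_or_lt with hG0 | hG0
  · rw [← hG0]; have := weakConst_pos; positivity
  -- `g` is the phase of `u` on `E`, so pairing `u` with `g` gives `∫_E |u| ≥ lam * |E|`
  set g : ℝ × ℝ × ℝ → ℂ := E.indicator (fun z => u z / ‖u z‖) with hg
  have hgm : Measurable g := by
    apply Measurable.indicator _ hEm
    exact u.continuous.measurable.div
      (Complex.measurable_ofReal.comp u.continuous.measurable.norm)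
  have hgn : ∀ z, ‖g z‖ = E.indicator (fun _ => (1 : ℝ)) z := by
    intro z
    rw [hg, norm_indicator_eq_indicator_norm]
    by_cases hz : z ∈ E
    · rw [Set.indicator_of_mem hz, Set.indicator_of_mem hz]
      have : 0 < ‖u z‖ := hl.trans hz
      simp [this.ne']
    · rw [Set.indicator_of_notMem hz, Set.indicator_of_notMem hz]
  have hg1 : ∀ z, ‖g z‖ ≤ 1 := by
    intro z; rw [hgn]; exact Set.indicator_le_self' (by simp) z
  set μ₁ : Measure ℝ := volume.restrict (Metric.closedBall 0 R) with hμ₁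
  set μ₂ : Measure (ℝ × ℝ) := volume.restrict (Metric.closedBall 0 R) with hμ₂
  have : IsFiniteMeasure μ₁ := ⟨by
    rw [hμ₁, Measure.restrict_apply_univ]; exact (isCompact_closedBall _ _).measure_lt_top⟩
  have : IsFiniteMeasure μ₂ := ⟨by
    rw [hμ₂, Measure.restrict_apply_univ]; exact (isCompact_closedBall _ _).measure_lt_top⟩
  have hμ : μ₁.prod μ₂ = volume.restrict (Metric.closedBall (0 : ℝ × ℝ × ℝ) R) := by
    rw [hμ₁, hμ₂, Measure.prod_restrict, closedBall_prod_same]; rfl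
  have hGi : ∫ z, ‖g z‖ ∂(μ₁.prod μ₂) = G := by
    simp only [hgn]
    rw [integral_indicator_const _ hEm, hμ, measureReal_restrict_apply hEm,
      Set.inter_eq_left.2 hR]
    simp [hGdef]
  have hgi : Integrable g (μ₁.prod μ₂) :=
    Integrable.of_bound hgm.aestronglyMeasurable 1 (Filter.Eventually.of_forall hg1)
  set gh : ℝ × ℝ × ℝ → ℂ := fun ζ => ∫ z, g z * chr (dot z ζ) ∂(μ₁.prod μ₂) with hgh
  have hdual : ∫ z, conj (g z) * u z ∂(μ₁.prod μ₂) = c * ∫ ζ, ft u ζ * conj (gh ζ) := by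
    have h1 : ∀ z, conj (g z) * u z = c * ∫ ζ, conj (g z) * (chr (-dot z ζ) * ft u ζ) := by
      intro z
      rw [integral_const_mul, hinv z]; ring
    simp only [h1]
    rw [integral_const_mul, integral_integral_swap]
    · congr 2; ext ζ
      rw [hgh, ← integral_conj, ← integral_const_mul]
      congr 1; ext z
      rw [map_mul, conj_chr]; ring
    · have h2 : Integrable (fun p : (ℝ × ℝ × ℝ) × (ℝ × ℝ × ℝ) => conj (g p.1) * ft u p.2)
          ((μ₁.prod μ₂).prod volume) :=
        Integrable.mul_prod (f := fun z => conj (g z))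
          ((Complex.conjLIE.toContinuousLinearEquiv : ℂ →L[ℝ] ℂ).integrable_comp hgi) hInt
      have h3 := h2.bdd_mul (c := 1) (f := fun p => chr (-dot p.1 p.2))
        (Continuous.aestronglyMeasurable (by fun_prop)) (by filter_upwards with p; simp)
      refine h3.congr ?_
      filter_upwards with p
      simp only [Function.uncurry]; ring
  have hlow : lam * G ≤ ‖∫ z, conj (g z) * u z ∂(μ₁.prod μ₂)‖ := by
    have h1 : ∀ z, conj (g z) * u z = ((E.indicator (fun z => ‖u z‖) z : ℝ) : ℂ) := by
      intro z
      by_cases hz : z ∈ E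
      · have : 0 < ‖u z‖ := hl.trans hz
        rw [hg, Set.indicator_of_mem hz, Set.indicator_of_mem hz, map_div₀, Complex.conj_ofReal,
          div_mul_eq_mul_div, mul_comm, Complex.mul_conj, Complex.normSq_eq_norm_sq]
        have h' : ((‖u z‖ : ℝ) : ℂ) ≠ 0 := by exact_mod_cast this.ne'
        field_simp
        push_cast; ring
      · rw [hg, Set.indicator_of_notMem hz, Set.indicator_of_notMem hz]; simp
    simp only [h1]
    rw [integral_complex_ofReal, Complex.norm_real, Real.norm_of_nonneg
      (integral_nonneg fun z => Set.indicator_nonneg (fun _ _ => norm_nonneg _) z),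
      ← hGi, ← integral_const_mul]
    apply integral_mono (hgi.norm.const_mul _)
    · apply Integrable.indicator _ hEm
      rw [hμ]; exact u.integrable.norm.restrict
    · intro z
      simp only [hgn]
      by_cases hz : z ∈ E
      · rw [Set.indicator_of_mem hz, Set.indicator_of_mem hz, mul_one]; exact le_of_lt hz
      · rw [Set.indicator_of_notMem hz, Set.indicator_of_notMem hz, mul_zero]
  -- `s = G ^ (3/5)` balances the two terms `s * G` and `s ^ (-2/3) * G ^ 2` of `ghat_bound`
  have hs : 0 < G ^ ((3 : ℝ) / 5) := by positivity
  have hb := ghat_bound hN hL μ₁ Measure.restrict_le_self μ₂ Measure.restrict_le_self hgm hg1 hs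
  have hcs := cs_support hcont (h := fun ζ => ‖gh ζ‖ₑ) (measurable_ghat _ hgm).enorm
    (L := L) measurableSet_square hsupp
  rw [hGi] at hb
  have hBeq : 4 * L * (2 * (4 * Real.pi ^ 2 * Real.exp 1) * G ^ ((3 : ℝ) / 5) * G +
      196 * (G ^ ((3 : ℝ) / 5)) ^ (-(2 : ℝ) / 3) * G ^ 2) = weakConst * L * G ^ ((8 : ℝ) / 5) := by
    have e1 : G ^ ((3 : ℝ) / 5) * G = G ^ ((8 : ℝ) / 5) := by
      rw [← Real.rpow_add_one hG0.ne']; norm_num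
    have e2 : (G ^ ((3 : ℝ) / 5)) ^ (-(2 : ℝ) / 3) * G ^ 2 = G ^ ((8 : ℝ) / 5) := by
      rw [← Real.rpow_mul hG0.le, ← Real.rpow_natCast, ← Real.rpow_add hG0]; norm_num
    rw [mul_assoc _ _ G, e1, mul_assoc 196, e2, weakConst]; ring
  rw [hBeq] at hb
  have hup : ENNReal.ofReal (lam * G) ^ 2 ≤
      ENNReal.ofReal (c ^ 2 * ((c⁻¹ * A) * (weakConst * L * G ^ ((8 : ℝ) / 5)))) := by
    calc ENNReal.ofReal (lam * G) ^ 2 ≤ (ENNReal.ofReal c * ∫⁻ ζ, ‖ft u ζ‖ₑ * ‖gh ζ‖ₑ) ^ 2 := by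
          gcongr
          refine (ENNReal.ofReal_le_ofReal hlow).trans ?_
          rw [ofReal_norm, hdual, enorm_mul]
          gcongr
          · rw [← ofReal_norm, Complex.norm_real, Real.norm_of_nonneg hc0.le]
          · refine (enorm_integral_le_lintegral_enorm _).trans (le_of_eq ?_)
            congr 1; ext ζ
            rw [enorm_mul, RCLike.enorm_conj]
      _ ≤ ENNReal.ofReal c ^ 2 * (ENNReal.ofReal (c⁻¹ * A) *
            ENNReal.ofReal (weakConst * L * G ^ ((8 : ℝ) / 5))) := by
          rw [mul_pow]
          gcongr
          refine hcs.trans ?_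
          gcongr
          rw [lintegral_enorm_sq hInt2, hpl]
      _ = _ := by
          rw [ENNReal.ofReal_mul (by positivity : 0 ≤ c ^ 2), ENNReal.ofReal_pow hc0.le,
            ENNReal.ofReal_mul (by positivity : 0 ≤ c⁻¹ * A)]
  have hW := weakConst_pos
  rw [← ENNReal.ofReal_pow (by positivity), ENNReal.ofReal_le_ofReal_iff (by positivity)] at hup
  have hfin : lam ^ 2 * G ^ ((2 : ℝ) / 5) ≤ weakConst * L * A := by
    have e : G ^ 2 = G ^ ((2 : ℝ) / 5) * G ^ ((8 : ℝ) / 5) := by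
      rw [← Real.rpow_add hG0, ← Real.rpow_natCast]; norm_num
    have h8 : 0 < G ^ ((8 : ℝ) / 5) := by positivity
    rw [mul_pow, e] at hup
    have h9 : lam ^ 2 * G ^ ((2 : ℝ) / 5) ≤ c * (weakConst * L * A) := by
      apply le_of_mul_le_mul_right _ h8
      calc _ = lam ^ 2 * (G ^ ((2 : ℝ) / 5) * G ^ ((8 : ℝ) / 5)) := by ring
        _ ≤ _ := hup
        _ = _ := by field_simp
    exact h9.trans (mul_le_of_le_one_left (by positivity) hc1)
  have h10 := Real.rpow_le_rpow (by positivity) hfin (by norm_num : (0 : ℝ) ≤ 5 / 2)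
  have h11 : (lam ^ 2 * G ^ ((2 : ℝ) / 5)) ^ ((5 : ℝ) / 2) = lam ^ (5 : ℝ) * G := by
    rw [Real.mul_rpow (by positivity) (by positivity), ← Real.rpow_mul hG0.le,
      ← Real.rpow_natCast, ← Real.rpow_mul hl.le]
    norm_num
  rw [h11] at h10
  rw [Real.rpow_neg hl.le, ← div_eq_mul_inv, le_div_iff₀ (by positivity), mul_comm]
  exact h10

/-! ### Layer cake and interpolation -/

lemma integrable_norm_sq (u : SchwartzMap (ℝ × ℝ × ℝ) ℂ) :
    Integrable (fun z => ‖u z‖ ^ 2) := by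
  have := (u.memLp 2).integrable_norm_pow (by norm_num)
  simpa using this

lemma chebyshev (u : SchwartzMap (ℝ × ℝ × ℝ) ℂ) {t : ℝ} (ht : 0 < t) :
    volume {z | t < ‖u z‖} ≤ ENNReal.ofReal ((∫ z, ‖u z‖ ^ 2) * t ^ (-(2 : ℝ))) := by
  have h1 := meas_ge_le_lintegral_div (μ := volume) (f := fun z => ‖u z‖ₑ ^ 2)
    (u.continuous.measurable.enorm.pow_const 2).aemeasurable (ε := ENNReal.ofReal (t ^ 2))
    (by simpa using ht.ne') ENNReal.ofReal_ne_top
  rw [lintegral_enorm_sq (integrable_norm_sq u)] at h1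
  rw [Real.rpow_neg ht.le, ← div_eq_mul_inv, ENNReal.ofReal_div_of_pos (by positivity)]
  norm_cast
  refine (measure_mono ?_).trans h1
  intro z hz
  simp only [Set.mem_ofPred_eq] at hz ⊢
  rw [← ofReal_norm, ← ENNReal.ofReal_pow (norm_nonneg _)]
  exact ENNReal.ofReal_le_ofReal (by gcongr)

/-- The layer-cake formula turns the weak-type `L²` and `L⁵` bounds into a strong `L^p` bound; the
first is used below the threshold `Λ` and the second above it. -/
lemma layer_bound {p L A W : ℝ} (hp2 : 2 < p) (hp4 : p < 4) (hL : 0 < L) (hA : 0 < A)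
    (hW : 0 < W) (u : SchwartzMap (ℝ × ℝ × ℝ) ℂ)
    (h2 : ∀ t : ℝ, 0 < t → volume {z | t < ‖u z‖} ≤ ENNReal.ofReal (A * t ^ (-(2 : ℝ))))
    (h5 : ∀ t : ℝ, 0 < t → volume {z | t < ‖u z‖} ≤
      ENNReal.ofReal ((W * L * A) ^ ((5 : ℝ) / 2) * t ^ (-(5 : ℝ)))) :
    ∫⁻ z, ENNReal.ofReal (‖u z‖ ^ p) ≤ ENNReal.ofReal
      (p * ((p - 2)⁻¹ + W ^ ((5 : ℝ) / 2) * (5 - p)⁻¹) *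
        (L ^ (5 * (p - 2) / 6) * A ^ (p / 2))) := by
  rw [lintegral_rpow_eq_lintegral_meas_lt_mul volume (Filter.Eventually.of_forall fun z =>
    norm_nonneg _) u.continuous.norm.aemeasurable (by linarith : 0 < p)]
  -- the threshold at which the two distributional bounds agree up to a constant
  set Λ := L ^ ((5 : ℝ) / 6) * A ^ ((1 : ℝ) / 2) with hΛ
  have hΛ0 : 0 < Λ := by positivity
  rw [mul_assoc p, ENNReal.ofReal_mul (by linarith)]
  gcongr
  rw [← Set.Ioc_union_Ioi_eq_Ioi hΛ0.le, lintegral_union measurableSet_Ioi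
    (Set.Ioc_disjoint_Ioi le_rfl)]
  have hlow : ∫⁻ t in Set.Ioc 0 Λ, volume {z | t < ‖u z‖} * ENNReal.ofReal (t ^ (p - 1)) ≤
      ENNReal.ofReal (A * (Λ ^ (p - 2) * (p - 2)⁻¹)) := by
    have hInt : IntegrableOn (fun t : ℝ => t ^ (p - 3)) (Set.Ioc 0 Λ) := by
      have := intervalIntegral.intervalIntegrable_rpow' (a := 0) (b := Λ)
        (by linarith : -1 < p - 3)
      rwa [intervalIntegrable_iff_integrableOn_Ioc_of_le hΛ0.le] at this
    have hval : ∫ t in Set.Ioc 0 Λ, t ^ (p - 3) = Λ ^ (p - 2) * (p - 2)⁻¹ := by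
      rw [← intervalIntegral.integral_of_le hΛ0.le, integral_rpow (Or.inl (by linarith)),
        show p - 3 + 1 = p - 2 by ring, Real.zero_rpow (by linarith), sub_zero, div_eq_mul_inv]
    rw [← hval, ENNReal.ofReal_mul hA.le, ofReal_integral_eq_lintegral_ofReal hInt
      (by filter_upwards [ae_restrict_mem measurableSet_Ioc] with t ht
          exact Real.rpow_nonneg ht.1.le _), ← lintegral_const_mul _ (by fun_prop)]
    apply setLIntegral_mono (by fun_prop)
    intro t ht
    have ht0 : 0 < t := ht.1
    calc _ ≤ ENNReal.ofReal (A * t ^ (-(2 : ℝ))) * ENNReal.ofReal (t ^ (p - 1)) := by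
          gcongr; exact h2 t ht0
      _ = _ := by
          rw [← ENNReal.ofReal_mul (by positivity), ← ENNReal.ofReal_mul (by positivity),
            mul_assoc, ← Real.rpow_add ht0]
          congr 3; ring
  have hhigh : ∫⁻ t in Set.Ioi Λ, volume {z | t < ‖u z‖} * ENNReal.ofReal (t ^ (p - 1)) ≤
      ENNReal.ofReal ((W * L * A) ^ ((5 : ℝ) / 2) * (Λ ^ (p - 5) * (5 - p)⁻¹)) := by
    have hInt : IntegrableOn (fun t : ℝ => t ^ (p - 6)) (Set.Ioi Λ) :=
      integrableOn_Ioi_rpow_of_lt (by linarith) hΛ0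
    have hval : ∫ t in Set.Ioi Λ, t ^ (p - 6) = Λ ^ (p - 5) * (5 - p)⁻¹ := by
      rw [integral_Ioi_rpow_of_lt (by linarith) hΛ0, show p - 6 + 1 = p - 5 by ring,
        ← neg_div_neg_eq, neg_neg, neg_sub, div_eq_mul_inv]
    rw [← hval, ENNReal.ofReal_mul (by positivity), ofReal_integral_eq_lintegral_ofReal hInt
      (by filter_upwards [ae_restrict_mem measurableSet_Ioi] with t ht
          exact Real.rpow_nonneg (hΛ0.trans ht).le _), ← lintegral_const_mul _ (by fun_prop)]
    apply setLIntegral_mono (by fun_prop)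
    intro t ht
    have ht0 : 0 < t := hΛ0.trans ht
    calc _ ≤ ENNReal.ofReal ((W * L * A) ^ ((5 : ℝ) / 2) * t ^ (-(5 : ℝ))) *
            ENNReal.ofReal (t ^ (p - 1)) := by
          gcongr; exact h5 t ht0
      _ = _ := by
          rw [← ENNReal.ofReal_mul (by positivity), ← ENNReal.ofReal_mul (by positivity),
            mul_assoc, ← Real.rpow_add ht0]
          congr 3; ring
  refine (add_le_add hlow hhigh).trans ?_
  have hp5 : 0 < (5 - p)⁻¹ := inv_pos.2 (by linarith)
  have hp2' : 0 < (p - 2)⁻¹ := inv_pos.2 (by linarith)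
  rw [← ENNReal.ofReal_add (by positivity) (by positivity)]
  apply ENNReal.ofReal_le_ofReal (le_of_eq _)
  have e1 : A * Λ ^ (p - 2) = L ^ (5 * (p - 2) / 6) * A ^ (p / 2) := by
    rw [hΛ]
    obtain ⟨l, rfl⟩ : ∃ l, L = Real.exp l := ⟨_, (Real.exp_log hL).symm⟩
    obtain ⟨a, rfl⟩ : ∃ l, A = Real.exp l := ⟨_, (Real.exp_log hA).symm⟩
    simp only [← Real.exp_mul, ← Real.exp_add]
    congr 1; ring
  have e2 : (W * L * A) ^ ((5 : ℝ) / 2) * Λ ^ (p - 5) =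
      W ^ ((5 : ℝ) / 2) * (L ^ (5 * (p - 2) / 6) * A ^ (p / 2)) := by
    rw [hΛ]
    obtain ⟨l, rfl⟩ : ∃ l, L = Real.exp l := ⟨_, (Real.exp_log hL).symm⟩
    obtain ⟨a, rfl⟩ : ∃ l, A = Real.exp l := ⟨_, (Real.exp_log hA).symm⟩
    obtain ⟨w, rfl⟩ : ∃ l, W = Real.exp l := ⟨_, (Real.exp_log hW).symm⟩
    simp only [← Real.exp_mul, ← Real.exp_add]
    congr 1; ring
  rw [← mul_assoc, e1, ← mul_assoc, e2]; ring

lemma interp_bound {X : ℝ≥0∞} {a b θ q : ℝ} (ha : 0 ≤ a) (hb : 0 ≤ b) (hθ : 0 ≤ θ)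
    (hθ1 : θ ≤ 1) (hq : 0 ≤ q) (hXa : X ≤ ENNReal.ofReal a) (hXb : X ≤ ENNReal.ofReal b) :
    X ^ q ≤ ENNReal.ofReal ((a ^ (1 - θ) * b ^ θ) ^ q) := by
  have h1 : X = X ^ (1 - θ) * X ^ θ := by
    rw [← ENNReal.rpow_add_of_nonneg _ _ (by linarith) hθ]; simp
  rw [← ENNReal.ofReal_rpow_of_nonneg (by positivity) hq, ENNReal.ofReal_mul (by positivity),
    ← ENNReal.ofReal_rpow_of_nonneg ha (by linarith), ← ENNReal.ofReal_rpow_of_nonneg hb hθ]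
  apply ENNReal.rpow_le_rpow _ hq
  rw [h1]
  exact mul_le_mul' (ENNReal.rpow_le_rpow hXa (by linarith)) (ENNReal.rpow_le_rpow hXb hθ)

/-- `L^{4/(1+δ)}` Strichartz-type estimate for functions dyadically localized at
`|(ξ,η)| ∼ N`, `|ξ+η| ∼ M`, `|τ-ξ³-η³| ∼ L`:
`‖u‖_{L^{4/(1+δ)}} ≤ C (NM)^{ε/4} L^{5(1-δ)/12 - ε/6} ‖u‖_{L²}`. -/
theorem lp_strichartz_localized :
    ∃ δ₀ : ℝ, δ₀ ∈ Set.Ioo (0 : ℝ) 1 ∧ ∀ δ : ℝ, δ ∈ Set.Ioo 0 δ₀ →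
      ∀ ε : ℝ, 0 < ε → ε < 1 - δ →
        ∃ C : ℝ, 0 < C ∧
          ∀ N M L : ℝ, (∃ n : ℤ, N = 2 ^ n) → (∃ m : ℤ, M = 2 ^ m) →
            (∃ l : ℤ, L = 2 ^ l) →
            ∀ u : SchwartzMap (ℝ × ℝ × ℝ) ℂ,
              (∀ τ ξ η : ℝ, ftt (fun t x y => u (t, x, y)) τ ξ η ≠ 0 →
                (N / 2 ≤ Real.sqrt (ξ ^ 2 + η ^ 2) ∧ Real.sqrt (ξ ^ 2 + η ^ 2) ≤ 2 * N ∧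
                  M / 2 ≤ |ξ + η| ∧ |ξ + η| ≤ 2 * M ∧
                  L / 2 ≤ |τ - ξ ^ 3 - η ^ 3| ∧ |τ - ξ ^ 3 - η ^ 3| ≤ 2 * L)) →
              lpnorm3 (4 / (1 + δ)) (fun t x y => u (t, x, y)) ≤
                ENNReal.ofReal
                    (C * (N * M) ^ (ε / 4) * L ^ (5 * (1 - δ) / 12 - ε / 6)) *
                  lpnorm3 2 (fun t x y => u (t, x, y)) := by
  -- any `δ₀ < 1` would do: `δ < 1` serves only to make `2 < p` and `0 < 1 - δ` below
  refine ⟨1 / 2, by norm_num, ?_⟩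
  rintro δ ⟨hδ0, hδ1⟩ ε hε hεδ
  set p := 4 / (1 + δ) with hp
  have hp2 : 2 < p := by rw [hp, lt_div_iff₀ (by linarith)]; linarith
  have hp4 : p < 4 := by rw [hp, div_lt_iff₀ (by linarith)]; linarith
  set θ := ε / (1 - δ) with hθ
  have hδ' : 0 < 1 - δ := by linarith
  have hθ0 : 0 < θ := div_pos hε hδ'
  have hθ1 : θ < 1 := by rw [hθ, div_lt_one hδ']; exact hεδ
  have hW := weakConst_pos
  set K := p * ((p - 2)⁻¹ + weakConst ^ ((5 : ℝ) / 2) * (5 - p)⁻¹) with hK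
  have hK0 : 0 < K := by
    have hp5 : 0 < (5 - p)⁻¹ := inv_pos.2 (by linarith)
    have hp2' : 0 < (p - 2)⁻¹ := inv_pos.2 (by linarith)
    positivity
  refine ⟨(K ^ (1 - θ) * ((64 : ℝ) ^ ((p - 2) / 2)) ^ θ) ^ (1 / p), by positivity, ?_⟩
  rintro N M L ⟨n, hn⟩ ⟨m, hm⟩ ⟨l, hl⟩ u hu
  have hN : 0 < N := by rw [hn]; positivity
  have hM : 0 < M := by rw [hm]; positivity
  have hL : 0 < L := by rw [hl]; positivity
  clear hn hm hl
  have hsupp : ∀ ζ : ℝ × ℝ × ℝ, ft u ζ ≠ 0 → |ζ.2.1| ≤ 2 * N ∧ |ζ.2.2| ≤ 2 * N ∧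
      |ζ.2.1 + ζ.2.2| ≤ 2 * M ∧ |ζ.1 - ζ.2.1 ^ 3 - ζ.2.2 ^ 3| ≤ 2 * L := by
    intro ζ hζ
    obtain ⟨_, h2, _, h4, _, h6⟩ := hu ζ.1 ζ.2.1 ζ.2.2 hζ
    refine ⟨le_trans ?_ h2, le_trans ?_ h2, h4, h6⟩
    · exact Real.abs_le_sqrt (by nlinarith [sq_nonneg ζ.2.2])
    · exact Real.abs_le_sqrt (by nlinarith [sq_nonneg ζ.2.1])
  have hsup := sup_bound hN hM hL u fun ζ hζ =>
    ⟨⟨(hsupp ζ hζ).1, (hsupp ζ hζ).2.2.1⟩, (hsupp ζ hζ).2.2.2⟩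
  have hweak := fun (t : ℝ) (ht : 0 < t) => weak_bound hN hL u (fun ζ hζ =>
    ⟨⟨(hsupp ζ hζ).1, (hsupp ζ hζ).2.1⟩, (hsupp ζ hζ).2.2.2⟩) ht
  have hcheb := fun (t : ℝ) (ht : 0 < t) => chebyshev u ht
  have hl2 := lintegral_enorm_sq (integrable_norm_sq u)
  set A := ∫ z, ‖u z‖ ^ 2 with hAdef
  have hA : 0 ≤ A := integral_nonneg fun _ => by positivity
  have hX : lpnorm3 p (fun t x y => u (t, x, y)) =
      (∫⁻ z, ENNReal.ofReal (‖u z‖ ^ p)) ^ (1 / p) := by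
    unfold lpnorm3
    congr 2; ext z
    rw [← ENNReal.ofReal_rpow_of_nonneg (norm_nonneg _) (by linarith), ofReal_norm]
    rfl
  have h2 : lpnorm3 2 (fun t x y => u (t, x, y)) = ENNReal.ofReal (A ^ ((1 : ℝ) / 2)) := by
    rw [← ENNReal.ofReal_rpow_of_nonneg hA (by norm_num), ← hl2]
    unfold lpnorm3
    congr 2; ext z
    rw [ENNReal.rpow_ofNat]; rfl
  -- if `‖u‖_{L²} = 0` then `u = 0` by the sup bound
  rcases hA.eq_or_lt with hA0 | hA0
  · have hz : ∀ z, u z = 0 := fun z => by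
      have := hsup z
      rw [← hA0, mul_zero] at this
      simpa using le_antisymm this (by positivity)
    rw [hX]
    simp [hz, Real.zero_rpow (by linarith : p ≠ 0), ENNReal.zero_rpow_of_pos
      (by positivity : 0 < p⁻¹)]
  have hXb : ∫⁻ z, ENNReal.ofReal (‖u z‖ ^ p) ≤
      ENNReal.ofReal ((64 * (N * M * L) * A) ^ ((p - 2) / 2) * A) := by
    rw [ENNReal.ofReal_mul (by positivity), ← hl2, ← lintegral_const_mul _
      (u.continuous.measurable.enorm.pow_const 2)]
    apply lintegral_mono
    intro z
    simp only
    rw [← ofReal_norm, ← ENNReal.ofReal_pow (norm_nonneg _), ← ENNReal.ofReal_mul (by positivity)]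
    apply ENNReal.ofReal_le_ofReal
    calc ‖u z‖ ^ p = (‖u z‖ ^ 2) ^ ((p - 2) / 2) * ‖u z‖ ^ 2 := by
          rw [← Real.rpow_natCast, ← Real.rpow_mul (norm_nonneg _),
            ← Real.rpow_add_of_nonneg (norm_nonneg _)]
          · congr 1; push_cast; ring
          · push_cast; linarith
          · norm_num
      _ ≤ _ := by
          gcongr
          exact hsup z
  have hXa := layer_bound hp2 hp4 hL hA0 hW u hcheb hweak
  have hInt := interp_bound (q := 1 / p) (by positivity) (by positivity) hθ0.le hθ1.le
    (by positivity) hXa hXb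
  rw [hX, h2, ← ENNReal.ofReal_mul (by positivity)]
  refine hInt.trans (ENNReal.ofReal_le_ofReal (le_of_eq ?_))
  rw [← hK]
  clear_value K
  -- both sides are products of powers of positive numbers: compare logarithms
  clear hInt hXa hXb hX h2 hl2 hcheb hweak hsup hsupp hu
  clear_value A
  obtain ⟨k, rfl⟩ : ∃ l, K = Real.exp l := ⟨_, (Real.exp_log hK0).symm⟩
  obtain ⟨a, rfl⟩ : ∃ l, A = Real.exp l := ⟨_, (Real.exp_log hA0).symm⟩
  obtain ⟨n, rfl⟩ : ∃ l, N = Real.exp l := ⟨_, (Real.exp_log hN).symm⟩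
  obtain ⟨m, rfl⟩ : ∃ l, M = Real.exp l := ⟨_, (Real.exp_log hM).symm⟩
  obtain ⟨l, rfl⟩ : ∃ l, L = Real.exp l := ⟨_, (Real.exp_log hL).symm⟩
  obtain ⟨s, hs⟩ : ∃ l, (64 : ℝ) = Real.exp l := ⟨_, (Real.exp_log (by norm_num)).symm⟩
  rw [hs]
  simp only [← Real.exp_mul, ← Real.exp_add]
  congr 1
  have hδ2 : 1 + δ ≠ 0 := by linarith
  have hδ3 : 1 - δ ≠ 0 := by linarith
  rw [hθ, hp]
  field_simp
  ring
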